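/- Let Ω ⊂ ℝ^d be a bounded, connected, open set admitting the relative isoperimetric inequality, let p ≥ 1, let 𝒜 be a family of pairs of C¹ coefficients, each admissible with the same constant κ, and let M > 0 satisfy M > u_{I,i}(x) for every (A,m) ∈ 𝒜, every x ∈ Ω̄, every I ⊆ {1,…,N} and every coordinate i, where u_I(x) ∈ ℝ^N is the unique solution of the linear system u_i = 0 (i ∈ I), m_j(x) − Σ_k a_{jk}(x) u_k = 0 (j ∉ I). Let U ⊆ C¹(Ω̄; ℝ^N) be such that: (i) u ≥ 0 on Ω for every u ∈ U; (ii) one cannot choose a sequence (u_n) ⊆ U bounded in L^p(Ω; ℝ^N), a sequence ((A_n, m_n)) ⊆ 𝒜, and a nonempty index set I ⊆ {1,…,N} such that u_{in} → 0 in measure on Ω for every i ∈ I and f_{in} → 0 in measure on Ω for every i ∉ I, where f_{in}(x) = m_{i,n}(x) − Σ_j a_{ij,n}(x) u_{jn}(x). Then there exists C > 0 (depending on Ω, p, κ, 𝒜, U) such that for every u ∈ U and every (A, m) ∈ 𝒜, ∫_Ω Σ_{i=1}^N |f_i(x)|^p dx ≤ C ∫_Ω Σ_{i=1}^N ũ_i(x)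 (|f_i(x)|^p + |∇f_i(x)|^p) dx, where f_i(x) = m_i(x) − Σ_j a_{ij}(x) u_j(x), ũ_i(x) = min(u_i(x), M), and the right-hand side may be infinite. -/

import Mathlib

/-!
The values `u(x)` lie in the orthant `u ≥ 0`, and the right-hand side `R` controls the weighted
density `Σ_i min(u_i, M) |f_i|^p`, which vanishes exactly when for each `i` either `u_i = 0` or
`f_i = 0`. The region `u ≥ 0`, `f ≥ 0` has the combinatorial structure of a cube: positivity of the
minors `Δ_I` and `Δ_{I,j}` shows that the facets `u_i = 0` and `f_i = 0` are disjoint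
(`fComp_pos_of_eq_zero`). Compactness of the set of admissible coefficients makes this
quantitative with a constant depending only on `N`, `p`, `κ`, `M` (`exists_pointwise_constants`):
where the density is small, each `f_i` is either `≥ c` (so that `u_i` is small) or `≤ c/2` with
`u_i ≥ c` (so that `f_i` is small).

To pass between the two regimes for a given `i`, the function `min (f_i - c/2, min_j (f_j + c))` has
to cross the interval `(0, c/2)`. In this transition zone the active component has both its weight
and its absolute value bounded below, so its gradient is controlled by the energy density. Applying
the isoperimetric inequality to the superlevel sets of the minimum, together with an Eilenberg type
inequality for the Hausdorff measure of level sets (`exists_coarea_majorant`), gives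
`min (|{f_i ≥ c}|, |{f_i ≤ c/2}|) ≤ C R` up to the restriction `f ≥ -c/2` on the first set
(`exists_transition_bound`).

Hence there is an index set `I` such that, off sets of measure `O(R)`, `u_i` is small for `i ∈ I` and
`f_i` is small for `i ∉ I`; if `I = ∅` the inequality follows directly (`exists_alternative`). If the
theorem failed, there would be a sequence with constants tending to infinity; since the left-hand
side is at most `C₁ (|Ω| + R)`, this forces `R → 0` and `I ≠ ∅`. Passing to a subsequence with
constant `I` gives convergence in measure and an `L^p` bound, which the separation hypothesis on `U`
excludes.
-/

open MeasureTheory Filter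

/-- Principal minor of `A` over the index set `I`. -/
noncomputable def minorP {N : ℕ} (A : Matrix (Fin N) (Fin N) ℝ) (I : Finset (Fin N)) : ℝ :=
  Matrix.det (Matrix.of fun i j : {x : Fin N // x ∈ I} => A i.1 j.1)

/-- The determinant `Δ_{I,j}` obtained by bordering the principal minor over `I`
with the column `m` and the row `j`. -/
noncomputable def minorM {N : ℕ} (A : Matrix (Fin N) (Fin N) ℝ) (m : Fin N → ℝ)
    (I : Finset (Fin N)) (j : Fin N) : ℝ :=
  Matrix.det (Matrix.of fun k l : Option {x : Fin N // x ∈ I} =>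
    match k, l with
    | some k', some l' => A k'.1 l'.1
    | some k', none => m k'.1
    | none, some l' => A j l'.1
    | none, none => m j)

/-- An admissible pair of coefficients with constant `κ`:
entries of `A` and `m` bounded by `1/κ`, all principal minors `Δ_I ≥ κ`,
and all bordered determinants `Δ_{I,j} ≥ κ` for `j ∉ I`. -/
def IsAdmissible {N : ℕ} (κ : ℝ) (A : Matrix (Fin N) (Fin N) ℝ) (m : Fin N → ℝ) : Prop :=
  (∀ i j, |A i j| ≤ 1 / κ) ∧ (∀ i, m i ≤ 1 / κ) ∧
    (∀ I : Finset (Fin N), κ ≤ minorP A I) ∧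
    (∀ I : Finset (Fin N), ∀ j ∉ I, κ ≤ minorM A m I j)

/-- `f_i(u) = m_i − Σ_j a_{ij} u_j`. -/
def fComp {N : ℕ} (A : Matrix (Fin N) (Fin N) ℝ) (m : Fin N → ℝ) (u : Fin N → ℝ)
    (i : Fin N) : ℝ :=
  m i - ∑ j, A i j * u j

/-! ### Algebra of the principal and bordered minors -/

/-- Schur complement identity. If `Δ_S ≠ 0`, the system `(A v)_k = m_k` (`k ∈ S`) has a solution
`v` supported on `S`, and the bordered determinant factors as `Δ_{S,j} = Δ_S · f_j(v)`. -/
lemma exists_solution_minorM {N : ℕ} (A : Matrix (Fin N) (Fin N) ℝ) (m : Fin N → ℝ)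
    (S : Finset (Fin N)) (hS : minorP A S ≠ 0) :
    ∃ v : Fin N → ℝ, (∀ k ∉ S, v k = 0) ∧ (∀ k ∈ S, ∑ j, A k j * v j = m k) ∧
      ∀ j, minorM A m S j = minorP A S * (m j - ∑ k, A j k * v k) := by
  classical
  set P : Matrix {x // x ∈ S} {x // x ∈ S} ℝ := Matrix.of fun i j => A i.1 j.1 with hP
  have hPdet : P.det ≠ 0 := hS
  have hPu : IsUnit P.det := isUnit_iff_ne_zero.2 hPdet
  set v' : {x // x ∈ S} → ℝ := P⁻¹.mulVec (fun k => m k.1) with hv'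
  have hsol : P.mulVec v' = fun k => m k.1 := by
    rw [hv', Matrix.mulVec_mulVec, Matrix.mul_nonsing_inv _ hPu, Matrix.one_mulVec]
  set v : Fin N → ℝ := fun k => if h : k ∈ S then v' ⟨k, h⟩ else 0 with hv
  have hsum : ∀ i, ∑ j, A i j * v j = ∑ j : {x // x ∈ S}, A i j.1 * v' j := by
    intro i
    have h1 : ∑ j, A i j * v j = ∑ j ∈ S, A i j * v j := by
      symm
      apply Finset.sum_subset (Finset.subset_univ _)
      intro x _ hx
      simp [hv, hx]
    rw [h1, ← Finset.sum_coe_sort S]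
    apply Finset.sum_congr rfl
    intro j _
    simp [hv]
  refine ⟨v, fun k hk => by simp [hv, hk], fun k hk => ?_, fun j => ?_⟩
  · rw [hsum]
    have := congrFun hsol ⟨k, hk⟩
    simpa [Matrix.mulVec, dotProduct, hP] using this
  · rw [hsum]
    let : Invertible P := Matrix.invertibleOfIsUnitDet P hPu
    have key : minorM A m S j = (Matrix.fromBlocks P
        (Matrix.of fun (k : {x // x ∈ S}) (_ : PUnit.{1}) => m k.1)
        (Matrix.of fun (_ : PUnit.{1}) (l : {x // x ∈ S}) => A j l.1)
        (Matrix.of fun (_ _ : PUnit.{1}) => m j)).det := by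
      rw [minorM, ← Matrix.det_reindex_self (Equiv.optionEquivSumPUnit.{0} {x // x ∈ S})]
      congr 1
      ext a b
      rcases a with a | a <;> rcases b with b | b <;> simp [hP]
    rw [key, Matrix.det_fromBlocks₁₁]
    congr 1
    rw [Matrix.det_unique, Matrix.invOf_eq_nonsing_inv, Matrix.mul_assoc]
    simp only [Matrix.sub_apply, Matrix.of_apply, Matrix.mul_apply]
    congr 1

/-- A principal minor over `insert i S` is a bordered minor over `S`. -/
lemma minorP_insert {N : ℕ} (A : Matrix (Fin N) (Fin N) ℝ) (S : Finset (Fin N)) (i : Fin N)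
    (hi : i ∉ S) : minorP A (insert i S) = minorM A (fun k => A k i) S i := by
  classical
  rw [minorP, minorM, ← Matrix.det_reindex_self (Finset.subtypeInsertEquivOption hi)]
  congr 1
  ext a b
  rcases a with _ | a <;> rcases b with _ | b <;> simp [Finset.subtypeInsertEquivOption]

/-- Moving from `w` in the direction `-z`, stop at the first time a coordinate vanishes. -/
lemma exists_first_hit {N : ℕ} (w z : Fin N → ℝ) (S : Finset (Fin N))
    (hw : ∀ k ∈ S, 0 < w k) (hw0 : ∀ k ∉ S, w k = 0) (hz0 : ∀ k ∉ S, z k = 0)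
    (hz : ∃ k, 0 < z k) :
    ∃ t : ℝ, 0 < t ∧ (∀ k, 0 ≤ w k - t * z k) ∧
      (Finset.univ.filter fun k => 0 < w k - t * z k) ⊂ S := by
  classical
  obtain ⟨k0, hk0⟩ := hz
  obtain ⟨k1, hk1, hmin⟩ := Finset.exists_min_image (Finset.univ.filter fun k => 0 < z k)
    (fun k => w k / z k) ⟨k0, by simpa using hk0⟩
  have hz1 : 0 < z k1 := by simpa using hk1
  have hk1S : k1 ∈ S := by
    by_contra h
    exact hz1.ne' (hz0 _ h)
  have ht : 0 < w k1 / z k1 := div_pos (hw _ hk1S) hz1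
  refine ⟨w k1 / z k1, ht, fun k => ?_, ?_⟩
  · rcases le_or_gt (z k) 0 with h | h
    · have hwk : 0 ≤ w k := by
        by_cases hk : k ∈ S
        · exact (hw k hk).le
        · exact (hw0 k hk).ge
      nlinarith
    · have := hmin k (by simpa using h)
      rw [le_div_iff₀ h] at this
      linarith
  · rw [Finset.ssubset_iff_of_subset]
    · refine ⟨k1, hk1S, ?_⟩
      simp [div_mul_cancel₀ _ hz1.ne']
    · intro k hk
      by_contra hkS
      simp [hw0 k hkS, hz0 k hkS] at hk

/-- A matrix with positive principal minors does not reverse the sign of a nonzero nonnegative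
vector on its support. -/
lemma eq_zero_of_sign_reversal {N : ℕ} (A : Matrix (Fin N) (Fin N) ℝ)
    (hA : ∀ S, 0 < minorP A S) (w : Fin N → ℝ) (hw : ∀ i, 0 ≤ w i)
    (hAw : ∀ i, 0 < w i → ∑ j, A i j * w j ≤ 0) : w = 0 := by
  classical
  induction hn : (Finset.univ.filter fun k => 0 < w k) using Finset.strongInduction
    generalizing w with
  | H S ih =>
    by_contra hne
    obtain ⟨i, hi⟩ : ∃ i, 0 < w i := by
      by_contra! h
      exact hne (funext fun i => le_antisymm (h i) (hw i))
    have hmem : ∀ k, k ∈ S ↔ 0 < w k := by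
      intro k
      simp [← hn]
    have hwS0 : ∀ k ∉ S, w k = 0 := fun k hk =>
      le_antisymm (not_lt.1 fun h => hk ((hmem k).2 h)) (hw k)
    have hiS : i ∈ S := (hmem i).2 hi
    have hins : insert i (S.erase i) = S := Finset.insert_erase hiS
    obtain ⟨v, hv0, hv1, hv2⟩ := exists_solution_minorM A (fun k => A k i) (S.erase i) (hA _).ne'
    have hr : 0 < A i i - ∑ k, A i k * v k := by
      have h1 := hv2 i
      rw [← minorP_insert A _ i (Finset.notMem_erase i S), hins] at h1
      have h2 := hA S
      rw [h1] at h2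
      exact (pos_iff_pos_of_mul_pos h2).1 (hA _)
    -- `z` is supported on `S`, with `z_i = 1`, `(A z)_k = 0` on `S \ {i}` and `(A z)_i > 0`
    set z : Fin N → ℝ := fun k => (if k = i then 1 else 0) - v k with hz
    have hAz : ∀ k, ∑ j, A k j * z j = A k i - ∑ j, A k j * v j := by
      intro k
      simp [hz, mul_sub, Finset.sum_sub_distrib]
    have hzi : z i = 1 := by simp [hz, hv0 i (Finset.notMem_erase i S)]
    have hzS : ∀ k ∉ S, z k = 0 := by
      intro k hk
      have hki : k ≠ i := fun h => hk (h ▸ hiS)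
      simp [hz, hki, hv0 k (fun h => hk (Finset.mem_of_mem_erase h))]
    have hAzS : ∀ k ∈ S, 0 ≤ ∑ j, A k j * z j := by
      intro k hk
      rw [hAz]
      by_cases hki : k = i
      · subst hki; exact hr.le
      · rw [hv1 k (Finset.mem_erase.2 ⟨hki, hk⟩)]; simp
    obtain ⟨t, ht, hpos, hsub⟩ := exists_first_hit w z S (fun k hk => (hmem k).1 hk) hwS0 hzS
      ⟨i, by rw [hzi]; norm_num⟩
    have hlin : ∀ k, ∑ j, A k j * (w j - t * z j)
        = ∑ j, A k j * w j - t * ∑ j, A k j * z j := by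
      intro k
      rw [Finset.mul_sum, ← Finset.sum_sub_distrib]
      exact Finset.sum_congr rfl fun j _ => by ring
    have hzero := ih _ hsub (fun k => w k - t * z k) hpos (fun k hk => by
      have hkS : k ∈ S := hsub.1 (by simpa using hk)
      rw [hlin]
      have := hAw k ((hmem k).1 hkS)
      have := hAzS k hkS
      nlinarith) rfl
    have h0 : ∑ j, A i j * (w j - t * z j) = 0 := by
      apply Finset.sum_eq_zero
      intro j _
      have := congrFun hzero j
      simp only [Pi.zero_apply] at this
      rw [this, mul_zero]
    rw [hlin, hAz] at h0
    have := hAw i hi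
    nlinarith

/-- Exact separation of opposite facets. For `u ≥ 0` with `f_j(u) ≥ 0` on the support of `u`, a
vanishing coordinate `u_i = 0` forces `f_i(u) > 0`. The segment from the solution `v` of
`f_j = 0` (`j` in the support) through `u` is prolonged until it loses a coordinate; `f_i` is
affine and positive at both ends. -/
lemma fComp_pos_of_eq_zero {N : ℕ} (A : Matrix (Fin N) (Fin N) ℝ) (m : Fin N → ℝ)
    (hA : ∀ S, 0 < minorP A S) (hm : ∀ S, ∀ j ∉ S, 0 < minorM A m S j)
    (u : Fin N → ℝ) (hu : ∀ i, 0 ≤ u i) (hf : ∀ j, 0 < u j → 0 ≤ fComp A m u j)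
    (i : Fin N) (hi : u i = 0) : 0 < fComp A m u i := by
  classical
  induction hn : (Finset.univ.filter fun k => 0 < u k) using Finset.strongInduction
    generalizing u with
  | H S ih =>
    have hmem : ∀ k, k ∈ S ↔ 0 < u k := by
      intro k
      simp [← hn]
    have hS0 : ∀ k ∉ S, u k = 0 := fun k hk =>
      le_antisymm (not_lt.1 fun h => hk ((hmem k).2 h)) (hu k)
    have hiS : i ∉ S := fun h => ((hmem i).1 h).ne' hi
    obtain ⟨v, hv0, hv1, hv2⟩ := exists_solution_minorM A m S (hA _).ne'
    have hfv : 0 < fComp A m v i := by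
      have h2 := hm S i hiS
      rw [hv2 i] at h2
      exact (pos_iff_pos_of_mul_pos h2).1 (hA _)
    have hfvS : ∀ k ∈ S, fComp A m v k = 0 := fun k hk => by
      simp [fComp, hv1 k hk]
    have hdiff : ∀ k, ∑ j, A k j * (u j - v j) = fComp A m v k - fComp A m u k := by
      intro k
      simp only [mul_sub, Finset.sum_sub_distrib, fComp]
      ring
    by_cases hneg : ∃ k, 0 < v k - u k
    · obtain ⟨t, ht, hpos, hsub⟩ := exists_first_hit u (fun k => v k - u k) S
        (fun k hk => (hmem k).1 hk) hS0 (fun k hk => by simp [hS0 k hk, hv0 k hk]) hneg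
      have hlin : ∀ k, fComp A m (fun j => u j - t * (v j - u j)) k
          = (1 + t) * fComp A m u k - t * fComp A m v k := by
        intro k
        have : ∑ j, A k j * (u j - t * (v j - u j))
            = (1 + t) * ∑ j, A k j * u j - t * ∑ j, A k j * v j := by
          rw [Finset.mul_sum, Finset.mul_sum, ← Finset.sum_sub_distrib]
          exact Finset.sum_congr rfl fun j _ => by ring
        simp only [fComp]
        rw [this]
        ring
      have h := ih _ hsub (fun j => u j - t * (v j - u j)) hpos (fun k hk => by
        have hkS : k ∈ S := hsub.1 (by simpa using hk)
        rw [hlin, hfvS k hkS]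
        have := hf k ((hmem k).1 hkS)
        nlinarith) (by simp [hi, hv0 i hiS]) rfl
      rw [hlin] at h
      by_contra hcon
      nlinarith
    · push Not at hneg
      have hz := eq_zero_of_sign_reversal A hA (fun k => u k - v k)
        (fun k => by linarith [hneg k]) (fun k hk => by
          have hkS : k ∈ S := by
            by_contra h
            simp [hS0 k h, hv0 k h] at hk
          rw [hdiff, hfvS k hkS]
          linarith [hf k ((hmem k).1 hkS)])
      have huv : u = v := funext fun k => by
        have := congrFun hz k
        simp only [Pi.zero_apply] at this
        linarith
      rw [huv]
      exact hfv

/-! ### Uniform pointwise bounds by compactness -/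

lemma exists_pos_le_of_compact {X : Type*} [TopologicalSpace X] {K : Set X} (hK : IsCompact K)
    {φ : X → ℝ} (hφ : Continuous φ) (hpos : ∀ x ∈ K, 0 < φ x) :
    ∃ c : ℝ, 0 < c ∧ ∀ x ∈ K, c ≤ φ x := by
  rcases K.eq_empty_or_nonempty with rfl | hne
  · exact ⟨1, one_pos, by simp⟩
  · obtain ⟨x, hx, hmin⟩ := hK.exists_isMinOn hne hφ.continuousOn
    exact ⟨φ x, hpos x hx, fun y hy => hmin hy⟩

lemma IsAdmissible.m_mem {N : ℕ} {κ : ℝ} {A : Matrix (Fin N) (Fin N) ℝ} {m : Fin N → ℝ}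
    (h : IsAdmissible κ A m) (i : Fin N) : κ ≤ m i ∧ m i ≤ 1 / κ := by
  refine ⟨?_, h.2.1 i⟩
  have h1 := h.2.2.2 ∅ i (by simp)
  have h2 : minorM A m ∅ i = m i := by
    rw [minorM, Matrix.det_unique]
    rfl
  rwa [h2] at h1

lemma continuous_minorP {N : ℕ} (I : Finset (Fin N)) :
    Continuous fun A : Matrix (Fin N) (Fin N) ℝ => minorP A I := by
  unfold minorP
  apply Continuous.matrix_det
  refine continuous_matrix fun i j => ?_
  exact continuous_apply_apply _ _

lemma continuous_minorM {N : ℕ} (I : Finset (Fin N)) (j : Fin N) :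
    Continuous fun q : Matrix (Fin N) (Fin N) ℝ × (Fin N → ℝ) => minorM q.1 q.2 I j := by
  unfold minorM
  apply Continuous.matrix_det
  refine continuous_matrix fun k l => ?_
  have hA : ∀ a b : Fin N, Continuous fun q : Matrix (Fin N) (Fin N) ℝ × (Fin N → ℝ) =>
    q.1 a b := fun a b => (continuous_apply_apply a b).comp continuous_fst
  have hm : ∀ a : Fin N, Continuous fun q : Matrix (Fin N) (Fin N) ℝ × (Fin N → ℝ) =>
    q.2 a := fun a => (continuous_apply a).comp continuous_snd
  rcases k with _ | k <;> rcases l with _ | l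
  · exact hm _
  · exact hA _ _
  · exact hm _
  · exact hA _ _

lemma continuous_fComp {N : ℕ} (i : Fin N) :
    Continuous fun q : (Matrix (Fin N) (Fin N) ℝ × (Fin N → ℝ)) × (Fin N → ℝ) =>
      fComp q.1.1 q.1.2 q.2 i := by
  unfold fComp
  have hA : ∀ a b : Fin N, Continuous fun q : (Matrix (Fin N) (Fin N) ℝ × (Fin N → ℝ)) ×
    (Fin N → ℝ) => q.1.1 a b :=
    fun a b => (continuous_apply_apply a b).comp (continuous_fst.comp continuous_fst)
  have hm : ∀ a : Fin N, Continuous fun q : (Matrix (Fin N) (Fin N) ℝ × (Fin N → ℝ)) ×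
    (Fin N → ℝ) => q.1.2 a :=
    fun a => (continuous_apply a).comp (continuous_snd.comp continuous_fst)
  have hu : ∀ a : Fin N, Continuous fun q : (Matrix (Fin N) (Fin N) ℝ × (Fin N → ℝ)) ×
    (Fin N → ℝ) => q.2 a :=
    fun a => (continuous_apply a).comp continuous_snd
  exact (hm i).sub (continuous_finsetSum _ fun j _ => (hA i j).mul (hu j))

/-- The triples `(A, m, u)` with `(A, m)` admissible and `0 ≤ u ≤ K` form a compact set. -/
lemma isCompact_admissible {N : ℕ} (κ K : ℝ) :
    IsCompact {q : (Matrix (Fin N) (Fin N) ℝ × (Fin N → ℝ)) × (Fin N → ℝ) |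
      IsAdmissible κ q.1.1 q.1.2 ∧ ∀ i, q.2 i ∈ Set.Icc 0 K} := by
  have h1 : IsCompact {A : Matrix (Fin N) (Fin N) ℝ | ∀ i j, A i j ∈ Set.Icc (-(1/κ)) (1/κ)} := by
    have : IsCompact (Set.pi Set.univ fun _ : Fin N => Set.pi Set.univ fun _ : Fin N =>
        Set.Icc (-(1/κ)) (1/κ)) :=
      isCompact_univ_pi fun _ => isCompact_univ_pi fun _ => isCompact_Icc
    have hset : {A : Matrix (Fin N) (Fin N) ℝ | ∀ i j, A i j ∈ Set.Icc (-(1/κ)) (1/κ)} =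
        (Set.pi Set.univ fun _ : Fin N => Set.pi Set.univ fun _ : Fin N =>
          Set.Icc (-(1/κ)) (1/κ)) :=
      Set.ext fun A => ⟨fun h i _ j _ => h i j, fun h i j => h i trivial j trivial⟩
    rw [hset]
    exact this
  have h2 : ∀ a b : ℝ, IsCompact {m : Fin N → ℝ | ∀ i, m i ∈ Set.Icc a b} := by
    intro a b
    have : IsCompact (Set.pi Set.univ fun _ : Fin N => Set.Icc a b) :=
      isCompact_univ_pi fun _ => isCompact_Icc
    convert this using 1
    ext A
    simp only [Set.mem_ofPred_eq, Set.mem_pi, Set.mem_univ, true_imp_iff]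
  refine IsCompact.of_isClosed_subset ((h1.prod (h2 κ (1/κ))).prod (h2 0 K)) ?_ ?_
  · have hA : ∀ a b : Fin N, Continuous fun q : (Matrix (Fin N) (Fin N) ℝ × (Fin N → ℝ)) ×
      (Fin N → ℝ) => q.1.1 a b :=
      fun a b => (continuous_apply_apply a b).comp (continuous_fst.comp continuous_fst)
    have hm : ∀ a : Fin N, Continuous fun q : (Matrix (Fin N) (Fin N) ℝ × (Fin N → ℝ)) ×
      (Fin N → ℝ) => q.1.2 a :=
      fun a => (continuous_apply a).comp (continuous_snd.comp continuous_fst)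
    have hu : ∀ a : Fin N, Continuous fun q : (Matrix (Fin N) (Fin N) ℝ × (Fin N → ℝ)) ×
      (Fin N → ℝ) => q.2 a :=
      fun a => (continuous_apply a).comp continuous_snd
    simp only [IsAdmissible, Set.ofPred_and, Set.ofPred_forall, Set.mem_Icc]
    refine IsClosed.inter (IsClosed.inter ?_ (IsClosed.inter ?_ (IsClosed.inter ?_ ?_))) ?_
    · exact isClosed_iInter fun i => isClosed_iInter fun j =>
        isClosed_le (hA i j).abs continuous_const
    · exact isClosed_iInter fun i => isClosed_le (hm i) continuous_const
    · exact isClosed_iInter fun I => isClosed_le continuous_const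
        ((continuous_minorP I).comp (continuous_fst.comp continuous_fst))
    · exact isClosed_iInter fun I => isClosed_iInter fun j => isClosed_iInter fun _ =>
        isClosed_le continuous_const ((continuous_minorM I j).comp continuous_fst)
    · exact isClosed_iInter fun i => (isClosed_le continuous_const (hu i)).inter
        (isClosed_le (hu i) continuous_const)
  · rintro ⟨⟨A, m⟩, u⟩ ⟨hadm, hu⟩
    refine ⟨⟨?_, ?_⟩, hu⟩
    · intro i j
      exact abs_le.1 (hadm.1 i j)
    · intro i
      exact hadm.m_mem i

lemma IsAdmissible.pos_minors {N : ℕ} {κ : ℝ} (hκ : 0 < κ) {A : Matrix (Fin N) (Fin N) ℝ}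
    {m : Fin N → ℝ} (h : IsAdmissible κ A m) :
    (∀ S, 0 < minorP A S) ∧ ∀ S, ∀ j ∉ S, 0 < minorM A m S j :=
  ⟨fun S => hκ.trans_le (h.2.2.1 S), fun S j hj => hκ.trans_le (h.2.2.2 S j hj)⟩

/-- Uniform P-matrix property: some coordinate of `u ≥ 0` and of `A u` at the same index is
comparable to `‖u‖`. -/
lemma exists_uniform_P {N : ℕ} (hN : 0 < N) {κ : ℝ} (hκ : 0 < κ) :
    ∃ c₀ : ℝ, 0 < c₀ ∧ ∀ (A : Matrix (Fin N) (Fin N) ℝ) (m u : Fin N → ℝ), IsAdmissible κ A m →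
      (∀ i, 0 ≤ u i) → ∃ i, c₀ * ‖u‖ ≤ u i ∧ c₀ * ‖u‖ ≤ ∑ j, A i j * u j := by
  have hne : (Finset.univ : Finset (Fin N)).Nonempty := ⟨⟨0, hN⟩, Finset.mem_univ _⟩
  set X := {q : (Matrix (Fin N) (Fin N) ℝ × (Fin N → ℝ)) × (Fin N → ℝ) |
      IsAdmissible κ q.1.1 q.1.2 ∧ ∀ i, q.2 i ∈ Set.Icc 0 1} ∩ {q | ‖q.2‖ = 1} with hX
  have hXc : IsCompact X := (isCompact_admissible κ 1).inter_right
    (isClosed_eq continuous_snd.norm continuous_const)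
  have hcont : Continuous fun q : (Matrix (Fin N) (Fin N) ℝ × (Fin N → ℝ)) × (Fin N → ℝ) =>
      Finset.univ.sup' hne fun i => min (q.2 i) (q.1.2 i - fComp q.1.1 q.1.2 q.2 i) := by
    apply Continuous.finset_sup'_apply
    intro i _
    exact ((continuous_apply i).comp continuous_snd).min
      (((continuous_apply i).comp (continuous_snd.comp continuous_fst)).sub (continuous_fComp i))
  obtain ⟨c, hc, hmin⟩ := exists_pos_le_of_compact hXc hcont (by
    rintro ⟨⟨A, m⟩, u⟩ ⟨⟨hadm, hu⟩, hn⟩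
    simp only [Finset.lt_sup'_iff, Finset.mem_univ, true_and, lt_min_iff]
    by_contra! h
    have := eq_zero_of_sign_reversal A (hadm.pos_minors hκ).1 u (fun i => (hu i).1)
      (fun i hi => by
        have := h i hi
        simp only [fComp] at this
        linarith)
    simp [this] at hn)
  refine ⟨c, hc, fun A m u hadm hu => ?_⟩
  by_cases hu0 : u = 0
  · exact ⟨⟨0, hN⟩, by simp [hu0]⟩
  have hpos : 0 < ‖u‖ := norm_pos_iff.2 hu0
  have hmem : ((A, m), ‖u‖⁻¹ • u) ∈ X := by
    refine ⟨⟨hadm, fun i => ⟨?_, ?_⟩⟩, ?_⟩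
    · exact mul_nonneg (by positivity) (hu i)
    · have : u i ≤ ‖u‖ := (le_abs_self _).trans (norm_le_pi_norm u i)
      simp only [Pi.smul_apply, smul_eq_mul]
      rw [inv_mul_le_iff₀ hpos]
      linarith
    · simp [norm_smul, hpos.ne']
  have := hmin _ hmem
  simp only [Finset.le_sup'_iff, Finset.mem_univ, true_and, le_min_iff] at this
  obtain ⟨i, h1, h2⟩ := this
  refine ⟨i, ?_, ?_⟩
  · simp only [Pi.smul_apply, smul_eq_mul] at h1
    rw [le_inv_mul_iff₀ hpos] at h1
    linarith
  · have h3 : m i - fComp A m (‖u‖⁻¹ • u) i = ‖u‖⁻¹ * ∑ j, A i j * u j := by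
      simp only [fComp, Pi.smul_apply, smul_eq_mul, Finset.mul_sum]
      rw [sub_sub_cancel]
      exact Finset.sum_congr rfl fun j _ => by ring
    rw [h3, le_inv_mul_iff₀ hpos] at h2
    linarith

/-- The density `Σ_i min(u_i, M) |f_i|^p` of the zeroth-order part of the weighted energy. -/
noncomputable def wDens {N : ℕ} (p M : ℝ) (u f : Fin N → ℝ) : ℝ :=
  ∑ i, min (u i) M * |f i| ^ p

lemma le_wDens {N : ℕ} {p M : ℝ} (hM : 0 < M) {u f : Fin N → ℝ} (hu : ∀ i, 0 ≤ u i) (i : Fin N) :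
    min (u i) M * |f i| ^ p ≤ wDens p M u f := by
  refine Finset.single_le_sum (f := fun i => min (u i) M * |f i| ^ p) (fun j _ => ?_)
    (Finset.mem_univ i)
  exact mul_nonneg (le_min (hu j) hM.le) (by positivity)

lemma wDens_nonneg {N : ℕ} {p M : ℝ} (hM : 0 < M) {u f : Fin N → ℝ} (hu : ∀ i, 0 ≤ u i) :
    0 ≤ wDens p M u f :=
  Finset.sum_nonneg fun j _ => mul_nonneg (le_min (hu j) hM.le) (by positivity)

/-- Far from the origin the weighted density controls `‖u‖`: there is an index with `u_i ≥ 1` and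
`f_i < -1`, `|f_i| ≥ ‖u‖ / K`. -/
lemma exists_large_bound {N : ℕ} (hN : 0 < N) {κ : ℝ} (hκ : 0 < κ) :
    ∃ K : ℝ, 0 < K ∧ ∀ (A : Matrix (Fin N) (Fin N) ℝ) (m u : Fin N → ℝ), IsAdmissible κ A m →
      (∀ i, 0 ≤ u i) → K < ‖u‖ →
      ∃ i, 1 ≤ u i ∧ fComp A m u i < -1 ∧ ‖u‖ ≤ K * |fComp A m u i| := by
  obtain ⟨c, hc, h⟩ := exists_uniform_P hN hκ
  have hκ' : 0 < 1 / κ := by positivity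
  refine ⟨(1 + 1 / κ) / c, by positivity, fun A m u hadm hu hK => ?_⟩
  obtain ⟨i, h1, h2⟩ := h A m u hadm hu
  have hm := hadm.2.1 i
  rw [div_lt_iff₀ hc] at hK
  have hf : fComp A m u i ≤ 1 / κ - c * ‖u‖ := by
    simp only [fComp]; linarith
  have hf1 : fComp A m u i < -1 := by linarith
  refine ⟨i, by linarith, hf1, ?_⟩
  rw [abs_of_neg (by linarith), div_mul_eq_mul_div, le_div_iff₀ hc]
  nlinarith

/-- All pointwise information on `(u, f)` used below, with constants depending only on
`N, p, κ, M`. In the region `f ≥ -c` the facets `u_i = 0` and `f_i = 0` are separated; where the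
weighted density is below `η`, `f_i` avoids the interval `(c/2, c)`; and `|u|^p + |f|^p` grows at
most like the weighted density. -/
lemma exists_pointwise_constants {N : ℕ} (hN : 0 < N) {p κ M : ℝ} (hp : 1 ≤ p) (hκ : 0 < κ)
    (hM : 0 < M) :
    ∃ c η C₁ : ℝ, 0 < c ∧ 0 < η ∧ 0 < C₁ ∧
      ∀ (A : Matrix (Fin N) (Fin N) ℝ) (m u : Fin N → ℝ), IsAdmissible κ A m → (∀ i, 0 ≤ u i) →
      ((∀ j, -c ≤ fComp A m u j) → ∀ i, c ≤ u i ∨ c ≤ fComp A m u i) ∧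
      (wDens p M u (fComp A m u) < η → (∀ j, -(c / 2) ≤ fComp A m u j) ∧
        ∀ i, (fComp A m u i ≤ c / 2 ∧ c ≤ u i) ∨ c ≤ fComp A m u i) ∧
      (∑ i, |u i| ^ p + ∑ i, |fComp A m u i| ^ p ≤
        C₁ * (1 + wDens p M u (fComp A m u))) := by
  obtain ⟨K, hK0, hK⟩ := exists_large_bound (N := N) hN hκ
  have hp0 : 0 < p := by linarith
  have hne : (Finset.univ : Finset (Fin N)).Nonempty := ⟨⟨0, hN⟩, Finset.mem_univ _⟩
  have hbox : ∀ u : Fin N → ℝ, (∀ i, 0 ≤ u i) → ‖u‖ ≤ K → ∀ i, u i ∈ Set.Icc 0 K :=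
    fun u hu hn i => ⟨hu i, ((le_abs_self _).trans (norm_le_pi_norm u i)).trans hn⟩
  have hcu : ∀ i : Fin N, Continuous fun q : (Matrix (Fin N) (Fin N) ℝ × (Fin N → ℝ)) ×
      (Fin N → ℝ) => q.2 i := fun i => (continuous_apply i).comp continuous_snd
  -- By compactness and `fComp_pos_of_eq_zero`, the maximum of the `-f_j`, `u_i` and `f_i` is bounded
  -- below by a positive constant.
  have hB : ∀ i : Fin N, ∃ c : ℝ, 0 < c ∧ ∀ (A : Matrix (Fin N) (Fin N) ℝ) (m u : Fin N → ℝ),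
      IsAdmissible κ A m → (∀ i, 0 ≤ u i) → ‖u‖ ≤ K →
      (∃ j, fComp A m u j ≤ -c) ∨ c ≤ u i ∨ c ≤ fComp A m u i := by
    intro i
    have hcont : Continuous fun q : (Matrix (Fin N) (Fin N) ℝ × (Fin N → ℝ)) × (Fin N → ℝ) =>
        max (Finset.univ.sup' hne fun j => -fComp q.1.1 q.1.2 q.2 j)
          (max (q.2 i) (fComp q.1.1 q.1.2 q.2 i)) :=
      (Continuous.finset_sup'_apply _ fun j _ => (continuous_fComp j).neg).max
        ((hcu i).max (continuous_fComp i))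
    obtain ⟨c, hc, hmin⟩ := exists_pos_le_of_compact (isCompact_admissible κ K) hcont (by
      rintro ⟨⟨A, m⟩, u⟩ ⟨hadm, hu⟩
      simp only [lt_max_iff, Finset.lt_sup'_iff, Finset.mem_univ, true_and]
      by_contra! h
      obtain ⟨h1, h2, h3⟩ := h
      have := fComp_pos_of_eq_zero A m (hadm.pos_minors hκ).1 (hadm.pos_minors hκ).2 u
        (fun i => (hu i).1) (fun j _ => by linarith [h1 j]) i (le_antisymm h2 (hu i).1)
      linarith)
    refine ⟨c, hc, fun A m u hadm hu hn => ?_⟩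
    have := hmin ((A, m), u) ⟨hadm, hbox u hu hn⟩
    simp only [le_max_iff, Finset.le_sup'_iff, Finset.mem_univ, true_and] at this
    rcases this with ⟨j, hj⟩ | h | h
    · exact Or.inl ⟨j, by linarith⟩
    · exact Or.inr (Or.inl h)
    · exact Or.inr (Or.inr h)
  choose cB hcB hB using hB
  obtain ⟨i0, -, hi0⟩ := Finset.exists_min_image Finset.univ cB hne
  set c : ℝ := min (cB i0 / 2) 1 with hcdef
  have hc0 : 0 < c := lt_min (half_pos (hcB i0)) one_pos
  have hcle : ∀ i, c < cB i := fun i =>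
    (min_le_left _ _).trans_lt ((half_lt_self (hcB i0)).trans_le (hi0 i (Finset.mem_univ i)))
  have hc1 : c ≤ 1 := min_le_right _ _
  -- If the density vanishes then `f = 0` on the support of `u`, hence `f_j ≥ 0` for all `j` by
  -- `fComp_pos_of_eq_zero`; by compactness a small density still gives `f_j ≥ -c/2`.
  have hD : ∀ j : Fin N, ∃ η : ℝ, 0 < η ∧ ∀ (A : Matrix (Fin N) (Fin N) ℝ) (m u : Fin N → ℝ),
      IsAdmissible κ A m → (∀ i, 0 ≤ u i) → ‖u‖ ≤ K →
      η ≤ wDens p M u (fComp A m u) ∨ -(c / 2) ≤ fComp A m u j := by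
    intro j
    have hcw : Continuous fun q : (Matrix (Fin N) (Fin N) ℝ × (Fin N → ℝ)) × (Fin N → ℝ) =>
        wDens p M q.2 (fComp q.1.1 q.1.2 q.2) := by
      refine continuous_finsetSum _ fun i _ => ((hcu i).min continuous_const).mul ?_
      exact (continuous_fComp i).abs.rpow_const fun _ => Or.inr hp0.le
    have hcont : Continuous fun q : (Matrix (Fin N) (Fin N) ℝ × (Fin N → ℝ)) × (Fin N → ℝ) =>
        max (wDens p M q.2 (fComp q.1.1 q.1.2 q.2)) (fComp q.1.1 q.1.2 q.2 j + c / 2) :=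
      hcw.max ((continuous_fComp j).add continuous_const)
    obtain ⟨η, hη, hmin⟩ := exists_pos_le_of_compact (isCompact_admissible κ K) hcont (by
      rintro ⟨⟨A, m⟩, u⟩ ⟨hadm, hu⟩
      simp only [lt_max_iff]
      by_contra! h
      obtain ⟨h1, h2⟩ := h
      have hu0 : ∀ i, 0 ≤ u i := fun i => (hu i).1
      have hz : ∀ i, 0 < u i → fComp A m u i = 0 := by
        intro i hi
        by_contra hne
        have h3 := le_wDens (p := p) (f := fComp A m u) hM hu0 i
        have h4 : 0 < min (u i) M * |fComp A m u i| ^ p :=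
          mul_pos (lt_min hi hM) (Real.rpow_pos_of_pos (abs_pos.2 hne) _)
        linarith
      rcases (hu0 j).lt_or_eq with hj | hj
      · have := hz j hj
        linarith
      · have := fComp_pos_of_eq_zero A m (hadm.pos_minors hκ).1 (hadm.pos_minors hκ).2 u
          hu0 (fun i hi => (hz i hi).ge) j hj.symm
        linarith)
    refine ⟨η, hη, fun A m u hadm hu hn => ?_⟩
    have := hmin ((A, m), u) ⟨hadm, hbox u hu hn⟩
    simp only [le_max_iff] at this
    rcases this with h | h
    · exact Or.inl h
    · exact Or.inr (by linarith)
  choose ηD hηD hD using hD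
  obtain ⟨j0, -, hj0⟩ := Finset.exists_min_image Finset.univ ηD hne
  have hcM : 0 < min c M := lt_min hc0 hM
  set η : ℝ := min (min (ηD j0) (min 1 M)) (min c M * (c / 2) ^ p) with hηdef
  have hη0 : 0 < η := lt_min (lt_min (hηD j0) (lt_min one_pos hM))
    (mul_pos hcM (Real.rpow_pos_of_pos (half_pos hc0) _))
  have hη1 : ∀ j, η ≤ ηD j := fun j =>
    (min_le_left _ _).trans ((min_le_left _ _).trans (hj0 j (Finset.mem_univ j)))
  have hη2 : η ≤ min 1 M := (min_le_left _ _).trans (min_le_right _ _)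
  have hη3 : η ≤ min c M * (c / 2) ^ p := min_le_right _ _
  have h1M : 0 < min 1 M := lt_min one_pos hM
  -- The term of the weighted density at an index as provided by `hK`, for `‖u‖ > K`.
  have hbig : ∀ (A : Matrix (Fin N) (Fin N) ℝ) (m u : Fin N → ℝ), (∀ i, 0 ≤ u i) → ∀ i,
      1 ≤ u i → min 1 M * |fComp A m u i| ^ p ≤ wDens p M u (fComp A m u) := by
    intro A m u hu i hi
    refine le_trans ?_ (le_wDens hM hu i)
    exact mul_le_mul_of_nonneg_right (min_le_min_right _ hi) (by positivity)
  have hBall : ∀ (A : Matrix (Fin N) (Fin N) ℝ) (m u : Fin N → ℝ), IsAdmissible κ A m →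
      (∀ i, 0 ≤ u i) → (∀ j, -c ≤ fComp A m u j) → ∀ i, c ≤ u i ∨ c ≤ fComp A m u i := by
    intro A m u hadm hu hf i
    have hn : ‖u‖ ≤ K := by
      by_contra! hn
      obtain ⟨i, -, h2, -⟩ := hK A m u hadm hu hn
      linarith [hf i]
    rcases hB i A m u hadm hu hn with ⟨j, hj⟩ | h | h
    · linarith [hf j, hcle i]
    · exact Or.inl ((hcle i).le.trans h)
    · exact Or.inr ((hcle i).le.trans h)
  set L : ℝ := (1 + N) / κ with hL
  have hL0 : 0 < L := by positivity
  refine ⟨c, η, N * (1 + L ^ p) * (1 + K) ^ p * (1 + 1 / min 1 M), hc0, hη0, ?_, ?_⟩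
  · have : (0 : ℝ) < N := by exact_mod_cast hN
    positivity
  intro A m u hadm hu
  refine ⟨hBall A m u hadm hu, fun hw => ?_, ?_⟩
  · have hn : ‖u‖ ≤ K := by
      by_contra! hn
      obtain ⟨i, h1, h2, -⟩ := hK A m u hadm hu hn
      have h3 := hbig A m u hu i h1
      have h4 : 1 ≤ |fComp A m u i| ^ p := by
        apply Real.one_le_rpow _ hp0.le
        rw [abs_of_neg (by linarith)]; linarith
      nlinarith
    have hlow : ∀ j, -(c / 2) ≤ fComp A m u j := by
      intro j
      rcases hD j A m u hadm hu hn with h | h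
      · linarith [hη1 j]
      · exact h
    refine ⟨hlow, fun i => ?_⟩
    rcases hBall A m u hadm hu (fun j => by linarith [hlow j]) i with h | h
    · left
      refine ⟨?_, h⟩
      by_contra! hcon
      have h3 := le_wDens (p := p) (f := fComp A m u) hM hu i
      have h4 : min c M * (c / 2) ^ p ≤ min (u i) M * |fComp A m u i| ^ p := by
        apply mul_le_mul (min_le_min_right _ h) _ (by positivity) (le_min (hu i) hM.le)
        exact Real.rpow_le_rpow (by positivity) (hcon.le.trans (le_abs_self _)) hp0.le
      linarith
    · exact Or.inr h
  · have hn0 : 0 ≤ ‖u‖ := norm_nonneg u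
    have hu1 : ∀ i, |u i| ≤ 1 + ‖u‖ := fun i => (norm_le_pi_norm u i).trans (by linarith)
    have hf1 : ∀ i, |fComp A m u i| ≤ L * (1 + ‖u‖) := by
      intro i
      have hs : |∑ j, A i j * u j| ≤ N * (1 / κ * ‖u‖) := by
        refine (Finset.abs_sum_le_sum_abs _ _).trans ?_
        have : ∀ j ∈ Finset.univ, |A i j * u j| ≤ 1 / κ * ‖u‖ := fun j _ => by
          rw [abs_mul]
          exact mul_le_mul (hadm.1 i j) (norm_le_pi_norm u j) (abs_nonneg _) (by positivity)
        simpa using Finset.sum_le_card_nsmul _ _ _ this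
      have hm : |m i| ≤ 1 / κ := by
        have := hadm.m_mem i
        rw [abs_of_pos (by linarith)]; exact this.2
      have hab : |fComp A m u i| ≤ |m i| + |∑ j, A i j * u j| := abs_sub _ _
      have : L * (1 + ‖u‖) = 1 / κ + N * (1 / κ * ‖u‖) + (N * (1 / κ) + 1 / κ * ‖u‖) := by
        rw [hL]; ring
      have : 0 ≤ N * (1 / κ) + 1 / κ * ‖u‖ := by positivity
      linarith
    have hw0 := wDens_nonneg (p := p) (f := fComp A m u) hM hu
    have hmain : (1 + ‖u‖) ^ p ≤ (1 + K) ^ p * ((1 + 1 / min 1 M) *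
        (1 + wDens p M u (fComp A m u))) := by
      have h1 : 1 + wDens p M u (fComp A m u) / min 1 M ≤ (1 + 1 / min 1 M) *
          (1 + wDens p M u (fComp A m u)) := by
        have : (1 + 1 / min 1 M) * (1 + wDens p M u (fComp A m u)) =
          1 + wDens p M u (fComp A m u) / min 1 M + (1 / min 1 M + wDens p M u (fComp A m u)) := by
          ring
        have : 0 ≤ 1 / min 1 M + wDens p M u (fComp A m u) := by positivity
        linarith
      refine le_trans ?_ (mul_le_mul_of_nonneg_left h1 (by positivity))
      rcases le_or_gt ‖u‖ K with hn | hn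
      · have h2 : (1 + ‖u‖) ^ p ≤ (1 + K) ^ p :=
          Real.rpow_le_rpow (by positivity) (by linarith) hp0.le
        have h3 : 0 ≤ wDens p M u (fComp A m u) / min 1 M := by positivity
        have h4 : 0 < (1 + K) ^ p := by positivity
        nlinarith
      · obtain ⟨i, h2, h3, h4⟩ := hK A m u hadm hu hn
        have h5 : 1 ≤ |fComp A m u i| := by rw [abs_of_neg (by linarith)]; linarith
        have h6 : (1 + ‖u‖) ^ p ≤ (1 + K) ^ p * |fComp A m u i| ^ p := by
          rw [← Real.mul_rpow (by positivity) (by positivity)]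
          exact Real.rpow_le_rpow (by positivity) (by nlinarith) hp0.le
        refine h6.trans (mul_le_mul_of_nonneg_left ?_ (by positivity))
        have h7 : |fComp A m u i| ^ p ≤ wDens p M u (fComp A m u) / min 1 M := by
          rw [le_div_iff₀ h1M, mul_comm]
          exact hbig A m u hu i h2
        linarith
    have hsu : ∑ i, |u i| ^ p ≤ N * (1 + ‖u‖) ^ p := by
      have : ∀ j ∈ Finset.univ, |u j| ^ p ≤ (1 + ‖u‖) ^ p := fun j _ =>
        Real.rpow_le_rpow (abs_nonneg _) (hu1 j) hp0.le
      simpa using Finset.sum_le_card_nsmul _ _ _ this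
    have hsf : ∑ i, |fComp A m u i| ^ p ≤ N * (L ^ p * (1 + ‖u‖) ^ p) := by
      have : ∀ j ∈ Finset.univ, |fComp A m u j| ^ p ≤ L ^ p * (1 + ‖u‖) ^ p := fun j _ => by
        rw [← Real.mul_rpow (by positivity) (by positivity)]
        exact Real.rpow_le_rpow (abs_nonneg _) (hf1 j) hp0.le
      simpa using Finset.sum_le_card_nsmul _ _ _ this
    calc _ ≤ N * (1 + L ^ p) * (1 + ‖u‖) ^ p := by linarith
      _ ≤ N * (1 + L ^ p) * ((1 + K) ^ p * ((1 + 1 / min 1 M) *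
        (1 + wDens p M u (fComp A m u)))) := mul_le_mul_of_nonneg_left hmain (by positivity)
      _ = _ := by ring

/-! ### An Eilenberg (co-area) inequality for level sets -/

/-- Eilenberg's inequality for a Lipschitz function on a set. Since the integrand
`s ↦ μH[d-1](D ∩ h⁻¹{s})` is not known to be measurable, a measurable majorant is produced. -/
lemma exists_majorant_of_lipschitzOn {d : ℕ} (hd : 2 ≤ d) (D : Set (EuclideanSpace ℝ (Fin d)))
    (h : EuclideanSpace ℝ (Fin d) → ℝ) (L : NNReal) (hL : LipschitzOnWith L h D)
    (hD : μH[(d : ℝ)] D ≠ ⊤) :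
    ∃ φ : ℝ → ENNReal, Measurable φ ∧ (∀ s, μH[(d : ℝ) - 1] (D ∩ h ⁻¹' {s}) ≤ φ s) ∧
      ∫⁻ s, φ s ≤ L * μH[(d : ℝ)] D := by
  have hd2 : (2 : ℝ) ≤ d := by exact_mod_cast hd
  have hd1 : (0 : ℝ) < (d : ℝ) - 1 := by linarith
  have hd0 : (0 : ℝ) < d := by linarith
  set r : ℕ → ENNReal := fun n => ((n : ENNReal) + 1)⁻¹ with hr
  have hr0 : ∀ n, 0 < r n := fun n => by simp [hr]
  have hrlim : Tendsto r atTop (nhds 0) := by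
    have h1 := (tendsto_add_atTop_iff_nat 1).2 ENNReal.tendsto_inv_nat_nhds_zero
    simpa [hr] using h1
  -- almost optimal coverings at scale `r n`
  have hcov : ∀ n, ∃ t : ℕ → Set (EuclideanSpace ℝ (Fin d)), D ⊆ ⋃ k, t k ∧
      (∀ k, Metric.ediam (t k) ≤ r n) ∧
      ∑' k, Metric.ediam (t k) ^ (d : ℝ) ≤ μH[(d : ℝ)] D + r n := by
    intro n
    have hlt : μH[(d : ℝ)] D < μH[(d : ℝ)] D + r n :=
      ENNReal.lt_add_right hD (hr0 n).ne'
    have hle : (⨅ (t : ℕ → Set (EuclideanSpace ℝ (Fin d))) (_ : D ⊆ ⋃ n, t n)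
        (_ : ∀ k, Metric.ediam (t k) ≤ r n),
          ∑' n, ⨆ _ : (t n).Nonempty, Metric.ediam (t n) ^ (d : ℝ)) ≤ μH[(d : ℝ)] D := by
      conv_rhs => rw [Measure.hausdorffMeasure_apply]
      exact le_iSup₂_of_le (r n) (hr0 n) le_rfl
    obtain ⟨t, ht⟩ := iInf_lt_iff.1 (hle.trans_lt hlt)
    obtain ⟨ht1, ht⟩ := iInf_lt_iff.1 ht
    obtain ⟨ht2, ht⟩ := iInf_lt_iff.1 ht
    refine ⟨t, ht1, ht2, le_trans (ENNReal.tsum_le_tsum fun k => ?_) ht.le⟩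
    rcases (t k).eq_empty_or_nonempty with he | hne
    · simp [he, ENNReal.zero_rpow_of_pos hd0]
    · exact le_iSup_of_le hne le_rfl
  choose t ht1 ht2 ht3 using hcov
  set J : ℕ → ℕ → Set ℝ := fun n k => toMeasurable volume (h '' (t n k ∩ D)) with hJ
  have hJvol : ∀ n k, volume (J n k) ≤ L * Metric.ediam (t n k) := by
    intro n k
    rw [hJ, measure_toMeasurable]
    refine (Real.volume_le_diam _).trans ?_
    refine Metric.ediam_le ?_
    rintro _ ⟨x, hx, rfl⟩ _ ⟨y, hy, rfl⟩
    refine (hL hx.2 hy.2).trans ?_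
    gcongr
    exact Metric.edist_le_ediam_of_mem hx.1 hy.1
  set g : ℕ → ℝ → ENNReal := fun n s =>
    ∑' k, (J n k).indicator (fun _ => Metric.ediam (t n k) ^ ((d : ℝ) - 1)) s with hg
  have hgm : ∀ n, Measurable (g n) := fun n =>
    Measurable.tsum fun k =>
      measurable_const.indicator (measurableSet_toMeasurable _ _)
  have hgint : ∀ n, ∫⁻ s, g n s ≤ L * (μH[(d : ℝ)] D + r n) := by
    intro n
    rw [hg]
    simp only
    rw [lintegral_tsum fun k =>
      (measurable_const.indicator (measurableSet_toMeasurable _ _)).aemeasurable]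
    refine le_trans ?_ (mul_le_mul_right (ht3 n) _)
    rw [← ENNReal.tsum_mul_left]
    refine ENNReal.tsum_le_tsum fun k => ?_
    rw [lintegral_indicator_const (measurableSet_toMeasurable _ _)]
    calc Metric.ediam (t n k) ^ ((d : ℝ) - 1) * volume (J n k)
        ≤ Metric.ediam (t n k) ^ ((d : ℝ) - 1) * (L * Metric.ediam (t n k)) := by
          gcongr; exact hJvol n k
      _ = L * (Metric.ediam (t n k) ^ ((d : ℝ) - 1) * Metric.ediam (t n k) ^ (1 : ℝ)) := by
          rw [ENNReal.rpow_one]; ring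
      _ = L * Metric.ediam (t n k) ^ (d : ℝ) := by
          rw [← ENNReal.rpow_add_of_nonneg _ _ hd1.le zero_le_one]
          congr 2
          ring
  refine ⟨fun s => liminf (fun n => g n s) atTop, Measurable.liminf hgm, fun s => ?_, ?_⟩
  · have := Measure.hausdorffMeasure_le_liminf_tsum ((d : ℝ) - 1) (D ∩ h ⁻¹' {s}) r hrlim
      (fun n k => t n k ∩ D ∩ h ⁻¹' {s})
      (Eventually.of_forall fun n k => (Metric.ediam_mono
        (Set.inter_subset_left.trans Set.inter_subset_left)).trans (ht2 n k))
      (Eventually.of_forall fun n x hx => by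
        obtain ⟨k, hk⟩ := Set.mem_iUnion.1 (ht1 n hx.1)
        exact Set.mem_iUnion.2 ⟨k, ⟨hk, hx.1⟩, hx.2⟩)
    refine this.trans (liminf_le_liminf (Eventually.of_forall fun n => ?_))
    refine ENNReal.tsum_le_tsum fun k => ?_
    rcases (t n k ∩ D ∩ h ⁻¹' {s}).eq_empty_or_nonempty with he | ⟨x, hx⟩
    · rw [he, Metric.ediam_empty, ENNReal.zero_rpow_of_pos hd1]
      exact zero_le
    · have hs : s ∈ J n k := subset_toMeasurable _ _ ⟨x, hx.1, hx.2⟩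
      rw [Set.indicator_of_mem hs]
      gcongr
      exact Set.inter_subset_left.trans Set.inter_subset_left
  · refine (lintegral_liminf_le hgm).trans ?_
    refine (liminf_le_liminf (Eventually.of_forall hgint)).trans ?_
    have h1 : Tendsto (fun n => (L : ENNReal) * (μH[(d : ℝ)] D + r n)) atTop
        (nhds (L * (μH[(d : ℝ)] D + 0))) :=
      ENNReal.Tendsto.const_mul (tendsto_const_nhds.add hrlim) (Or.inr ENNReal.coe_ne_top)
    rw [h1.liminf_eq, add_zero]

lemma norm_gradient_eq {d : ℕ} (h : EuclideanSpace ℝ (Fin d) → ℝ) (x : EuclideanSpace ℝ (Fin d)) :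
    ‖gradient h x‖ = ‖fderiv ℝ h x‖ := by
  rw [gradient, LinearIsometryEquiv.norm_map]

/-- Co-area type inequality on an open set. The additive `1` comes from splitting the set into
countably many pieces on each of which the gradient oscillates by at most `1`. -/
lemma exists_coarea_majorant {d : ℕ} (hd : 2 ≤ d) :
    ∃ C : NNReal, ∀ (O : Set (EuclideanSpace ℝ (Fin d))) (h : EuclideanSpace ℝ (Fin d) → ℝ),
      IsOpen O → ContDiffOn ℝ 1 h O →
      ∃ φ : ℝ → ENNReal, Measurable φ ∧ (∀ s, μH[(d : ℝ) - 1] (O ∩ h ⁻¹' {s}) ≤ φ s) ∧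
        ∫⁻ s, φ s ≤ C * ∫⁻ x in O, ENNReal.ofReal (‖gradient h x‖ + 1) := by
  have hH : (Measure.hausdorffMeasure (d : ℝ) :
      Measure (EuclideanSpace ℝ (Fin d))).IsAddHaarMeasure := by
    simpa using MeasureTheory.isAddHaarMeasure_hausdorffMeasure (E := EuclideanSpace ℝ (Fin d))
  have hscal := Measure.isAddLeftInvariant_eq_smul
    (Measure.hausdorffMeasure (d : ℝ) : Measure (EuclideanSpace ℝ (Fin d))) volume
  set C : NNReal := Measure.addHaarScalarFactor
    (Measure.hausdorffMeasure (d : ℝ) : Measure (EuclideanSpace ℝ (Fin d))) volume with hC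
  have hvol : ∀ S : Set (EuclideanSpace ℝ (Fin d)), μH[(d : ℝ)] S = C * volume S := by
    intro S
    conv_lhs => rw [hscal]
    rfl
  refine ⟨C, fun O h hO hh => ?_⟩
  rcases O.eq_empty_or_nonempty with rfl | hOne
  · exact ⟨fun _ => 0, measurable_const, by simp, by simp⟩
  have hdc : ContinuousOn (fderiv ℝ h) O := hh.continuousOn_fderiv_of_isOpen hO le_rfl
  have hdiff : ∀ x ∈ O, DifferentiableAt ℝ h x := fun x hx =>
    (hh.differentiableOn one_ne_zero).differentiableAt (hO.mem_nhds hx)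
  have hball : ∀ x, ∃ r : ℝ, x ∈ O → 0 < r ∧ Metric.ball x r ⊆ O ∧
      ∀ y ∈ Metric.ball x r, dist (fderiv ℝ h y) (fderiv ℝ h x) < 1 / 2 := by
    intro x
    by_cases hx : x ∈ O
    · obtain ⟨r, hr, hsub⟩ := Metric.mem_nhds_iff.1 (Filter.inter_mem (hO.mem_nhds hx)
        ((hdc.continuousAt (hO.mem_nhds hx)).preimage_mem_nhds
          (Metric.ball_mem_nhds _ (by norm_num : (0 : ℝ) < 1 / 2))))
      exact ⟨r, fun _ => ⟨hr, fun y hy => (hsub hy).1, fun y hy => (hsub hy).2⟩⟩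
    · exact ⟨0, fun h => absurd h hx⟩
  choose r hr using hball
  obtain ⟨T, hTO, hTc, hT⟩ := TopologicalSpace.countable_cover_nhdsWithin
    (f := fun x => Metric.ball x (r x)) (s := O)
    (fun x hx => mem_nhdsWithin_of_mem_nhds (Metric.ball_mem_nhds x (hr x hx).1))
  have hTne : T.Nonempty := by
    obtain ⟨x, hx⟩ := hOne
    obtain ⟨y, hy, -⟩ := Set.mem_iUnion₂.1 (hT hx)
    exact ⟨y, hy⟩
  obtain ⟨e, he⟩ := hTc.exists_eq_range hTne
  have heO : ∀ n, e n ∈ O := fun n => hTO (he ▸ Set.mem_range_self n)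
  set B : ℕ → Set (EuclideanSpace ℝ (Fin d)) := fun n => Metric.ball (e n) (r (e n)) with hB
  set D : ℕ → Set (EuclideanSpace ℝ (Fin d)) := disjointed B with hD
  have hDm : ∀ n, MeasurableSet (D n) := fun n =>
    MeasurableSet.disjointed (fun _ => measurableSet_ball) n
  have hDB : ∀ n, D n ⊆ B n := fun n => disjointed_subset B n
  have hDU : ⋃ n, D n = O := by
    rw [hD, iUnion_disjointed]
    apply Set.Subset.antisymm
    · exact Set.iUnion_subset fun n => (hr _ (heO n)).2.1
    · intro x hx
      obtain ⟨y, hy, hxy⟩ := Set.mem_iUnion₂.1 (hT hx)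
      rw [he] at hy
      obtain ⟨n, rfl⟩ := hy
      exact Set.mem_iUnion.2 ⟨n, hxy⟩
  set L : ℕ → NNReal := fun n => ‖fderiv ℝ h (e n)‖₊ + 1 / 2 with hLdef
  have hLip : ∀ n, LipschitzOnWith (L n) h (D n) := by
    intro n
    apply LipschitzOnWith.mono _ (hDB n)
    refine (convex_ball (e n) (r (e n))).lipschitzOnWith_of_nnnorm_fderiv_le (𝕜 := ℝ) ?_ ?_
    · intro x hx
      exact hdiff x ((hr _ (heO n)).2.1 hx)
    · intro x hx
      have h1 := (hr _ (heO n)).2.2 x hx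
      rw [← NNReal.coe_le_coe]
      push_cast [hLdef]
      rw [dist_eq_norm] at h1
      have := norm_le_norm_add_norm_sub' (fderiv ℝ h x) (fderiv ℝ h (e n))
      linarith
  have hfin : ∀ n, μH[(d : ℝ)] (D n) ≠ ⊤ := fun n =>
    ((measure_mono (hDB n)).trans_lt measure_ball_lt_top).ne
  choose φ hφm hφ hφi using fun n =>
    exists_majorant_of_lipschitzOn hd (D n) h (L n) (hLip n) (hfin n)
  refine ⟨fun s => ∑' n, φ n s, Measurable.tsum hφm, fun s => ?_, ?_⟩
  · rw [← hDU, Set.iUnion_inter]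
    exact (measure_iUnion_le _).trans (ENNReal.tsum_le_tsum fun n => hφ n s)
  · rw [lintegral_tsum fun n => (hφm n).aemeasurable, ← hDU,
      lintegral_iUnion hDm (disjoint_disjointed B), ← ENNReal.tsum_mul_left]
    refine ENNReal.tsum_le_tsum fun n => (hφi n).trans ?_
    rw [hvol, mul_left_comm]
    gcongr
    rw [← setLIntegral_const]
    refine setLIntegral_mono' (hDm n) fun x hx => ?_
    have h1 := (hr _ (heO n)).2.2 x (hDB n hx)
    rw [dist_comm, dist_eq_norm] at h1
    have := norm_le_norm_add_norm_sub' (fderiv ℝ h (e n)) (fderiv ℝ h x)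
    rw [norm_gradient_eq, ← ENNReal.ofReal_coe_nnreal]
    apply ENNReal.ofReal_le_ofReal
    push_cast [hLdef]
    linarith

/-! ### Isoperimetric estimate for the level sets of a minimum of functions -/

/-- Let `G = min_k h_k`. The isoperimetric inequality on the levels `{G > s}`, `0 < s < τ`, combined
with the co-area inequality, bounds the smaller of `|{G ≥ τ}|` and `|{G ≤ 0}|` by the gradients of
the `h_k` on any open sets `O k` containing the transition zones `{G = h_k ∈ (0, τ)}`. -/
lemma isoperimetric_levels {d : ℕ} (hd : 2 ≤ d) {Ω : Set (EuclideanSpace ℝ (Fin d))}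
    (hΩo : IsOpen Ω) (hΩf : volume Ω ≠ ⊤) {c : ℝ}
    (hiso : ∀ S : Set (EuclideanSpace ℝ (Fin d)), S ⊆ Ω →
      MeasurableSet S → volume S ≤ volume Ω / 2 →
      ENNReal.ofReal c * volume S ^ (((d : ℝ) - 1) / d) ≤ μH[(d : ℝ) - 1] (Ω ∩ frontier S))
    {C : NNReal}
    (hC : ∀ (O : Set (EuclideanSpace ℝ (Fin d))) (h : EuclideanSpace ℝ (Fin d) → ℝ),
      IsOpen O → ContDiffOn ℝ 1 h O →
      ∃ φ : ℝ → ENNReal, Measurable φ ∧ (∀ s, μH[(d : ℝ) - 1] (O ∩ h ⁻¹' {s}) ≤ φ s) ∧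
        ∫⁻ s, φ s ≤ C * ∫⁻ x in O, ENNReal.ofReal (‖gradient h x‖ + 1))
    {ι : Type*} [Fintype ι] (h : ι → EuclideanSpace ℝ (Fin d) → ℝ)
    (hh : ∀ k, ContDiffOn ℝ 1 (h k) Ω) (O : ι → Set (EuclideanSpace ℝ (Fin d)))
    (hO : ∀ k, IsOpen (O k)) (hOΩ : ∀ k, O k ⊆ Ω) {τ : ℝ}
    (htrans : ∀ x ∈ Ω, ∀ k, (∀ l, h k x ≤ h l x) → 0 < h k x → h k x < τ → x ∈ O k) :
    ENNReal.ofReal τ * (ENNReal.ofReal c *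
      min (volume {x ∈ Ω | ∀ k, τ ≤ h k x}) (volume {x ∈ Ω | ∃ k, h k x ≤ 0}) ^
        (((d : ℝ) - 1) / d)) ≤
      ∑ k, C * ∫⁻ x in O k, ENNReal.ofReal (‖gradient (h k) x‖ + 1) := by
  have hd2 : (2 : ℝ) ≤ d := by exact_mod_cast hd
  have hexp : 0 ≤ ((d : ℝ) - 1) / d := div_nonneg (by linarith) (by linarith)
  choose φ hφm hφ hφi using fun k => hC (O k) (h k) (hO k) ((hh k).mono (hOΩ k))
  set V := min (volume {x ∈ Ω | ∀ k, τ ≤ h k x}) (volume {x ∈ Ω | ∃ k, h k x ≤ 0}) with hV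
  have hcont : ∀ k, ContinuousOn (h k) Ω := fun k => (hh k).continuousOn
  have hlevel : ∀ s ∈ Set.Ioo 0 τ,
      ENNReal.ofReal c * V ^ (((d : ℝ) - 1) / d) ≤ ∑ k, φ k s := by
    intro s hs
    set S : Set (EuclideanSpace ℝ (Fin d)) := {x ∈ Ω | ∀ k, s < h k x} with hS
    have hSΩ : S ⊆ Ω := fun x hx => hx.1
    have hSo : IsOpen S := by
      have : S = Ω ∩ ⋂ k, (Ω ∩ h k ⁻¹' Set.Ioi s) := by
        ext x
        simp only [hS, Set.mem_inter_iff, Set.mem_iInter, Set.mem_preimage, Set.mem_Ioi]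
        exact ⟨fun hx => ⟨hx.1, fun k => ⟨hx.1, hx.2 k⟩⟩, fun hx => ⟨hx.1, fun k => (hx.2 k).2⟩⟩
      rw [this]
      exact hΩo.inter (isOpen_iInter_of_finite fun k =>
        (hcont k).isOpen_inter_preimage hΩo isOpen_Ioi)
    -- a point of `Ω` on the boundary of `S` has `min_k h_k = s`
    have hbd : ∀ x ∈ Ω, x ∈ closure S → x ∉ S → (∀ k, s ≤ h k x) ∧ ∃ k, h k x = s := by
      intro x hx hcl hxS
      have hge : ∀ k, s ≤ h k x := by
        intro k
        by_contra! hlt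
        have hop : IsOpen (Ω ∩ h k ⁻¹' Set.Iio s) :=
          (hcont k).isOpen_inter_preimage hΩo isOpen_Iio
        obtain ⟨y, hy1, hy2⟩ := mem_closure_iff.1 hcl _ hop ⟨hx, hlt⟩
        exact lt_asymm (hy2.2 k) hy1.2
      refine ⟨hge, ?_⟩
      by_contra! hne
      exact hxS ⟨hx, fun k => lt_of_le_of_ne (hge k) (hne k).symm⟩
    have hH : μH[(d : ℝ) - 1] {x ∈ Ω | x ∈ closure S ∧ x ∉ S} ≤ ∑ k, φ k s := by
      have hsub : {x ∈ Ω | x ∈ closure S ∧ x ∉ S} ⊆ ⋃ k, (O k ∩ h k ⁻¹' {s}) := by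
        rintro x ⟨hx, h1, h2⟩
        obtain ⟨hge, k, hk⟩ := hbd x hx h1 h2
        exact Set.mem_iUnion.2 ⟨k, htrans x hx k (fun l => hk ▸ hge l) (hk ▸ hs.1) (hk ▸ hs.2), hk⟩
      refine (measure_mono hsub).trans ((measure_iUnion_fintype_le _ _).trans ?_)
      exact Finset.sum_le_sum fun k _ => hφ k s
    rcases le_or_gt (volume S) (volume Ω / 2) with hle | hgt
    · refine le_trans ?_ ((hiso S hSΩ hSo.measurableSet hle).trans
        ((measure_mono ?_).trans hH))
      · gcongr
        exact (min_le_left _ _).trans (measure_mono fun x hx =>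
          ⟨hx.1, fun k => hs.2.trans_le (hx.2 k)⟩)
      · rintro x ⟨hx, hfr⟩
        rw [hSo.frontier_eq] at hfr
        exact ⟨hx, hfr⟩
    · have hcompl : volume (Ω \ S) ≤ volume Ω / 2 := by
        rw [measure_sdiff hSΩ hSo.measurableSet.nullMeasurableSet
          (ne_top_of_le_ne_top hΩf (measure_mono hSΩ))]
        rw [tsub_le_iff_right]
        calc volume Ω = volume Ω / 2 + volume Ω / 2 := (ENNReal.add_halves _).symm
          _ ≤ _ := by gcongr
      refine le_trans ?_ ((hiso (Ω \ S) Set.sdiff_subset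
        (hΩo.measurableSet.diff hSo.measurableSet) hcompl).trans ((measure_mono ?_).trans hH))
      · gcongr
        refine (min_le_right _ _).trans (measure_mono ?_)
        rintro x ⟨hx, k, hk⟩
        exact ⟨hx, fun hxS => absurd (hxS.2 k) (not_lt.2 (hk.trans hs.1.le))⟩
      · rintro x ⟨hx, hfr⟩
        have hxS : x ∉ S := by
          intro hxS
          obtain ⟨y, hy1, hy2⟩ := mem_closure_iff.1 (frontier_subset_closure hfr) S hSo hxS
          exact hy2.2 hy1
        refine ⟨hx, ?_, hxS⟩
        -- otherwise `x` is interior to `Ω \ S`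
        by_contra hcl
        apply hfr.2
        refine mem_interior.2 ⟨Ω ∩ (closure S)ᶜ, ?_, hΩo.inter isClosed_closure.isOpen_compl,
          hx, hcl⟩
        rintro y ⟨hy, hyc⟩
        exact ⟨hy, fun hyS => hyc (subset_closure hyS)⟩
  calc ENNReal.ofReal τ * (ENNReal.ofReal c * V ^ (((d : ℝ) - 1) / d))
      = ∫⁻ _ in Set.Ioo 0 τ, ENNReal.ofReal c * V ^ (((d : ℝ) - 1) / d) := by
        rw [setLIntegral_const, Real.volume_Ioo, sub_zero, mul_comm]
    _ ≤ ∫⁻ s in Set.Ioo 0 τ, ∑ k, φ k s := setLIntegral_mono' measurableSet_Ioo hlevel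
    _ ≤ ∫⁻ s, ∑ k, φ k s := setLIntegral_le_lintegral _ _
    _ = ∑ k, ∫⁻ s, φ k s := lintegral_finsetSum _ fun k _ => hφm k
    _ ≤ _ := Finset.sum_le_sum fun k _ => hφi k

/-- The weighted energy density `Σ_i min(u_i, M) (|f_i|^p + |∇f_i|^p)`. -/
noncomputable def eDens {d N : ℕ} (p M : ℝ) (u f : EuclideanSpace ℝ (Fin d) → Fin N → ℝ)
    (x : EuclideanSpace ℝ (Fin d)) : ℝ :=
  ∑ i, min (u x i) M * (|f x i| ^ p + ‖gradient (fun y => f y i) x‖ ^ p)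

/-- For each `i`, one of the sets `{min_j f_j ≥ -c/2, f_i ≥ c}` and `{f_i ≤ c/2}` is small, with
measure bounded by the weighted energy: the transition function
`min(f_i - c/2, min_j (f_j + c))` only varies where the weight `u_k` and `|f_k|` of the active
component are bounded below. -/
lemma exists_transition_bound {d N : ℕ} (hd : 2 ≤ d) {p M c : ℝ} (hp : 1 ≤ p) (hM : 0 < M)
    (hc : 0 < c) {Ω : Set (EuclideanSpace ℝ (Fin d))}
    (hΩo : IsOpen Ω) (hΩf : volume Ω ≠ ⊤)
    (hiso : ∃ c : ℝ, 0 < c ∧ ∀ S : Set (EuclideanSpace ℝ (Fin d)), S ⊆ Ω →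
      MeasurableSet S → volume S ≤ volume Ω / 2 →
      ENNReal.ofReal c * volume S ^ (((d : ℝ) - 1) / d) ≤ μH[(d : ℝ) - 1] (Ω ∩ frontier S)) :
    ∃ C₂ : NNReal, ∀ u f : EuclideanSpace ℝ (Fin d) → Fin N → ℝ,
      (∀ i, ContinuousOn (fun x => u x i) Ω) → (∀ i, ContDiffOn ℝ 1 (fun x => f x i) Ω) →
      (∀ x ∈ Ω, ∀ i, 0 ≤ u x i) →
      (∀ x ∈ Ω, (∀ j, -c ≤ f x j) → ∀ i, c ≤ u x i ∨ c ≤ f x i) →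
      ∀ i, min (volume {x ∈ Ω | (∀ j, -(c / 2) ≤ f x j) ∧ c ≤ f x i})
        (volume {x ∈ Ω | f x i ≤ c / 2}) ≤ C₂ * ∫⁻ x in Ω, ENNReal.ofReal (eDens p M u f x) := by
  obtain ⟨cΩ, hcΩ, hiso⟩ := hiso
  obtain ⟨C, hC⟩ := exists_coarea_majorant hd
  have hd2 : (2 : ℝ) ≤ d := by exact_mod_cast hd
  have hexp : 0 ≤ ((d : ℝ) - 1) / d := div_nonneg (by linarith) (by linarith)
  have hp0 : 0 < p := by linarith
  set μ : ℝ := min (c / 2) M with hμ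
  have hμ0 : 0 < μ := lt_min (by positivity) hM
  set q : ℝ := (c / 4) ^ p with hq
  have hq0 : 0 < q := by positivity
  set C₃ : ℝ := (2 / q + 1) / μ with hC₃
  have hC₃0 : 0 < C₃ := by positivity
  set a : ENNReal := ENNReal.ofReal (c / 2) * ENNReal.ofReal cΩ with ha
  have ha0 : a ≠ 0 := by
    rw [ha]
    exact mul_ne_zero (by simpa using hc) (by simpa using hcΩ)
  have haT : a ≠ ⊤ := ENNReal.mul_ne_top ENNReal.ofReal_ne_top ENNReal.ofReal_ne_top
  set b : ENNReal := volume Ω ^ (1 / (d : ℝ)) *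
    (a⁻¹ * ((N + 1 : ℕ) * (C * ENNReal.ofReal C₃))) with hb
  have hbT : b ≠ ⊤ := by
    refine ENNReal.mul_ne_top (ENNReal.rpow_ne_top_of_nonneg (by positivity) hΩf) ?_
    refine ENNReal.mul_ne_top (ENNReal.inv_ne_top.2 ha0) ?_
    exact ENNReal.mul_ne_top (ENNReal.natCast_ne_top _)
      (ENNReal.mul_ne_top ENNReal.coe_ne_top ENNReal.ofReal_ne_top)
  refine ⟨b.toNNReal, fun u f hu hf hu0 hB i => ?_⟩
  rw [ENNReal.coe_toNNReal hbT]
  set R := ∫⁻ x in Ω, ENNReal.ofReal (eDens p M u f x) with hR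
  set W : Fin N → Set (EuclideanSpace ℝ (Fin d)) := fun k =>
    (Ω ∩ (fun x => u x k) ⁻¹' Set.Ioi (c / 2)) ∩ (Ω ∩ (fun x => |f x k|) ⁻¹' Set.Ioi (c / 4))
    with hW
  have hWo : ∀ k, IsOpen (W k) := fun k =>
    ((hu k).isOpen_inter_preimage hΩo isOpen_Ioi).inter
      ((hf k).continuousOn.abs.isOpen_inter_preimage hΩo isOpen_Ioi)
  have hWΩ : ∀ k, W k ⊆ Ω := fun k x hx => hx.1.1
  -- on `W k` the constant `1` and `|∇f_k|` are both dominated by the weighted energy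
  have hWR : ∀ k, ∫⁻ x in W k, ENNReal.ofReal (‖gradient (fun y => f y k) x‖ + 1) ≤
      ENNReal.ofReal C₃ * R := by
    intro k
    calc ∫⁻ x in W k, ENNReal.ofReal (‖gradient (fun y => f y k) x‖ + 1)
        ≤ ∫⁻ x in W k, ENNReal.ofReal C₃ * ENNReal.ofReal (eDens p M u f x) := by
          refine setLIntegral_mono' (hWo k).measurableSet fun x hx => ?_
          rw [← ENNReal.ofReal_mul hC₃0.le]
          apply ENNReal.ofReal_le_ofReal
          have hxΩ := hWΩ k hx
          have hx1 : c / 2 < u x k := hx.1.2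
          have hx2 : c / 4 < |f x k| := hx.2.2
          set gk := ‖gradient (fun y => f y k) x‖ with hgk
          have hg0 : 0 ≤ gk := norm_nonneg _
          have h1 : gk ≤ 1 + gk ^ p := by
            rcases le_or_gt gk 1 with h | h
            · have : 0 ≤ gk ^ p := by positivity
              linarith
            · have := Real.rpow_le_rpow_of_exponent_le h.le hp
              rw [Real.rpow_one] at this
              linarith
          have h2 : q ≤ |f x k| ^ p := Real.rpow_le_rpow (by positivity) hx2.le hp0.le
          have h3 : min (u x k) M * (|f x k| ^ p + gk ^ p) ≤ eDens p M u f x := by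
            refine Finset.single_le_sum (f := fun i => min (u x i) M *
              (|f x i| ^ p + ‖gradient (fun y => f y i) x‖ ^ p)) (fun j _ => ?_)
              (Finset.mem_univ k)
            exact mul_nonneg (le_min (hu0 x hxΩ j) hM.le) (by positivity)
          have h4 : μ * (|f x k| ^ p + gk ^ p) ≤ eDens p M u f x := by
            refine le_trans ?_ h3
            exact mul_le_mul_of_nonneg_right (min_le_min_right _ hx1.le) (by positivity)
          have h5 : gk + 1 ≤ (2 / q + 1) * (|f x k| ^ p + gk ^ p) := by
            have h6 : 2 ≤ 2 / q * |f x k| ^ p := by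
              rw [div_mul_eq_mul_div, le_div_iff₀ hq0]
              linarith
            have h7 : 0 ≤ 2 / q * gk ^ p := by positivity
            have h8 : 0 ≤ |f x k| ^ p := by positivity
            nlinarith
          calc gk + 1 ≤ (2 / q + 1) * (|f x k| ^ p + gk ^ p) := h5
            _ = C₃ * (μ * (|f x k| ^ p + gk ^ p)) := by
              rw [hC₃]; field_simp
            _ ≤ C₃ * eDens p M u f x := mul_le_mul_of_nonneg_left h4 hC₃0.le
      _ = ENNReal.ofReal C₃ * ∫⁻ x in W k, ENNReal.ofReal (eDens p M u f x) :=
          lintegral_const_mul' _ _ ENNReal.ofReal_ne_top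
      _ ≤ ENNReal.ofReal C₃ * R := by
          gcongr
          exact lintegral_mono_set (hWΩ k)
  have hmain := isoperimetric_levels hd hΩo hΩf hiso hC (ι := Option (Fin N))
    (fun k => Option.elim k (fun x => f x i - c / 2) fun j x => f x j + c)
    (fun k => by
      rcases k with _ | j
      · exact (hf i).sub contDiffOn_const
      · exact (hf j).add contDiffOn_const)
    (fun k => Option.elim k (W i) W)
    (fun k => by rcases k with _ | j <;> exact hWo _)
    (fun k => by rcases k with _ | j <;> exact hWΩ _) (τ := c / 2)
    (by
      intro x hx k hmin h0 h1
      rcases k with _ | j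
      · simp only [Option.elim] at hmin h0 h1
        rcases hB x hx (fun j => by have := hmin (some j); simp only at this; linarith) i
          with h | h
        · refine ⟨⟨hx, ?_⟩, hx, ?_⟩
          · show c / 2 < u x i
            linarith
          · show c / 4 < |f x i|
            exact lt_of_lt_of_le (by linarith) (le_abs_self _)
        · linarith
      · simp only [Option.elim] at hmin h0 h1
        rcases hB x hx (fun l => by have := hmin (some l); simp only at this; linarith) j
          with h | h
        · refine ⟨⟨hx, ?_⟩, hx, ?_⟩
          · show c / 2 < u x j
            linarith
          · show c / 4 < |f x j|
            exact lt_of_lt_of_le (by linarith) (neg_le_abs _)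
        · linarith)
  set V := min (volume {x ∈ Ω | (∀ j, -(c / 2) ≤ f x j) ∧ c ≤ f x i})
        (volume {x ∈ Ω | f x i ≤ c / 2}) with hV
  have hVle : V ≤ min (volume {x ∈ Ω | ∀ k : Option (Fin N), c / 2 ≤
      (Option.elim k (fun x => f x i - c / 2) fun j x => f x j + c : _ → ℝ) x})
      (volume {x ∈ Ω | ∃ k : Option (Fin N),
        (Option.elim k (fun x => f x i - c / 2) fun j x => f x j + c : _ → ℝ) x ≤ 0}) := by
    apply min_le_min
    · refine measure_mono ?_
      rintro x ⟨hx, h1, h2⟩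
      refine ⟨hx, fun k => ?_⟩
      rcases k with _ | j
      · simp only [Option.elim]; linarith
      · simp only [Option.elim]; linarith [h1 j]
    · refine measure_mono ?_
      rintro x ⟨hx, h1⟩
      exact ⟨hx, none, by simp only [Option.elim]; linarith⟩
  have hsum : a * V ^ (((d : ℝ) - 1) / d) ≤ (N + 1 : ℕ) * (C * ENNReal.ofReal C₃) * R := by
    rw [ha, mul_assoc]
    refine le_trans (by gcongr) (hmain.trans ?_)
    have hk : ∀ k ∈ (Finset.univ : Finset (Option (Fin N))),
        (C : ENNReal) * ∫⁻ x in Option.elim k (W i) W, ENNReal.ofReal (‖gradient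
          (Option.elim k (fun x => f x i - c / 2) fun j x => f x j + c) x‖ + 1) ≤
        C * (ENNReal.ofReal C₃ * R) := by
      intro k _
      gcongr
      rcases k with _ | j
      · refine le_trans (le_of_eq ?_) (hWR i)
        simp only [Option.elim, gradient, fderiv_sub_const]
      · refine le_trans (le_of_eq ?_) (hWR j)
        simp only [Option.elim, gradient, fderiv_add_const]
    refine (Finset.sum_le_card_nsmul _ _ _ hk).trans (le_of_eq ?_)
    simp only [Finset.card_univ, Fintype.card_option, Fintype.card_fin, nsmul_eq_mul]
    ring
  have hVsplit : V ≤ volume Ω ^ (1 / (d : ℝ)) * V ^ (((d : ℝ) - 1) / d) := by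
    have hVΩ : V ≤ volume Ω := (min_le_left _ _).trans (measure_mono fun x hx => hx.1)
    calc V = V ^ (1 / (d : ℝ) + ((d : ℝ) - 1) / d) := by
          have : 1 / (d : ℝ) + ((d : ℝ) - 1) / d = 1 := by
            field_simp
            ring
          rw [this, ENNReal.rpow_one]
      _ = V ^ (1 / (d : ℝ)) * V ^ (((d : ℝ) - 1) / d) :=
          ENNReal.rpow_add_of_nonneg _ _ (by positivity) hexp
      _ ≤ _ := by gcongr
  refine hVsplit.trans ?_
  rw [hb, mul_assoc, mul_assoc]
  gcongr
  calc V ^ (((d : ℝ) - 1) / d) = a⁻¹ * (a * V ^ (((d : ℝ) - 1) / d)) := by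
        rw [← mul_assoc, ENNReal.inv_mul_cancel ha0 haT, one_mul]
    _ ≤ _ := by gcongr

/-! ### The alternative and the compactness argument -/

lemma wDens_le_eDens {d N : ℕ} {p M : ℝ} (hM : 0 < M)
    {u f : EuclideanSpace ℝ (Fin d) → Fin N → ℝ} {x : EuclideanSpace ℝ (Fin d)}
    (hu : ∀ i, 0 ≤ u x i) : wDens p M (u x) (f x) ≤ eDens p M u f x := by
  unfold wDens eDens
  refine Finset.sum_le_sum fun i _ => ?_
  refine mul_le_mul_of_nonneg_left ?_ (le_min (hu i) hM.le)
  linarith [Real.rpow_nonneg (norm_nonneg (gradient (fun y => f y i) x)) p]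

/-- Chebyshev's inequality for the weighted density. -/
lemma volume_wDens_ge_le {d N : ℕ} {p M : ℝ} (hM : 0 < M) {Ω : Set (EuclideanSpace ℝ (Fin d))}
    (hΩo : IsOpen Ω) {u f : EuclideanSpace ℝ (Fin d) → Fin N → ℝ}
    (hu0 : ∀ x ∈ Ω, ∀ i, 0 ≤ u x i)
    (hWc : ContinuousOn (fun x => wDens p M (u x) (f x)) Ω) {s : ℝ} (hs : 0 < s) :
    volume {x ∈ Ω | s ≤ wDens p M (u x) (f x)} ≤
      ENNReal.ofReal (1 / s) * ∫⁻ x in Ω, ENNReal.ofReal (eDens p M u f x) := by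
  set Z := {x ∈ Ω | s ≤ wDens p M (u x) (f x)} with hZ
  have hZm : MeasurableSet Z := by
    have h1 : IsOpen (Ω ∩ (fun x => wDens p M (u x) (f x)) ⁻¹' Set.Iio s) :=
      hWc.isOpen_inter_preimage hΩo isOpen_Iio
    have h2 : Z = Ω \ (Ω ∩ (fun x => wDens p M (u x) (f x)) ⁻¹' Set.Iio s) := by
      ext x
      simp only [hZ, Set.mem_ofPred_eq, Set.mem_sdiff, Set.mem_inter_iff, Set.mem_preimage,
        Set.mem_Iio, not_and, not_lt]
      tauto
    rw [h2]
    exact hΩo.measurableSet.diff h1.measurableSet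
  have h3 : ENNReal.ofReal s * volume Z ≤ ∫⁻ x in Ω, ENNReal.ofReal (eDens p M u f x) := by
    rw [← setLIntegral_const]
    refine (setLIntegral_mono' hZm (fun x hx => ?_)).trans
      (lintegral_mono_set (fun x hx => hx.1))
    exact ENNReal.ofReal_le_ofReal (hx.2.trans (wDens_le_eDens hM (hu0 x hx.1)))
  calc volume Z = ENNReal.ofReal (1 / s) * (ENNReal.ofReal s * volume Z) := by
        rw [← mul_assoc, ← ENNReal.ofReal_mul (by positivity), one_div, inv_mul_cancel₀ hs.ne']
        simp
    _ ≤ _ := by gcongr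

/-- The alternative behind the inequality. For each admissible configuration there is an index
set `I` such that, up to sets of measure `O(R)` with `R` the right-hand side, `u_i` is small for
`i ∈ I` and `f_i` is small for `i ∉ I`. If `I` is empty the inequality already holds with the
uniform constant `K`. -/
lemma exists_alternative {d N : ℕ} (hd : 2 ≤ d) (hN : 0 < N) {p κ M : ℝ} (hp : 1 ≤ p)
    (hκ : 0 < κ) (hM : 0 < M) {Ω : Set (EuclideanSpace ℝ (Fin d))} (hΩo : IsOpen Ω)
    (hΩf : volume Ω ≠ ⊤)
    (hiso : ∃ c : ℝ, 0 < c ∧ ∀ S : Set (EuclideanSpace ℝ (Fin d)), S ⊆ Ω →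
      MeasurableSet S → volume S ≤ volume Ω / 2 →
      ENNReal.ofReal c * volume S ^ (((d : ℝ) - 1) / d) ≤ μH[(d : ℝ) - 1] (Ω ∩ frontier S)) :
    ∃ (C₁ : ℝ) (K : ENNReal) (L : ℝ → ENNReal), 0 < C₁ ∧ K ≠ ⊤ ∧ (∀ δ, L δ ≠ ⊤) ∧
      ∀ (A : EuclideanSpace ℝ (Fin d) → Matrix (Fin N) (Fin N) ℝ)
        (m : EuclideanSpace ℝ (Fin d) → Fin N → ℝ)
        (u f : EuclideanSpace ℝ (Fin d) → Fin N → ℝ),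
        (∀ x ∈ Ω, IsAdmissible κ (A x) (m x)) → (∀ x, f x = fComp (A x) (m x) (u x)) →
        (∀ i, ContinuousOn (fun x => u x i) Ω) → (∀ i, ContDiffOn ℝ 1 (fun x => f x i) Ω) →
        (∀ x ∈ Ω, ∀ i, 0 ≤ u x i) →
        (∫⁻ x in Ω, ENNReal.ofReal (∑ i, |u x i| ^ p) ≤
          ENNReal.ofReal C₁ *
            (volume Ω + ∫⁻ x in Ω, ENNReal.ofReal (eDens p M u f x))) ∧
        (∫⁻ x in Ω, ENNReal.ofReal (∑ i, |f x i| ^ p) ≤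
          ENNReal.ofReal C₁ *
            (volume Ω + ∫⁻ x in Ω, ENNReal.ofReal (eDens p M u f x))) ∧
        ∃ I : Finset (Fin N),
          (I = ∅ → ∫⁻ x in Ω, ENNReal.ofReal (∑ i, |f x i| ^ p) ≤
            K * ∫⁻ x in Ω, ENNReal.ofReal (eDens p M u f x)) ∧
          (∀ i ∈ I, ∀ δ > 0, volume {x ∈ Ω | δ ≤ |u x i|} ≤
            L δ * ∫⁻ x in Ω, ENNReal.ofReal (eDens p M u f x)) ∧
          (∀ i ∉ I, ∀ δ > 0, volume {x ∈ Ω | δ ≤ |f x i|} ≤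
            L δ * ∫⁻ x in Ω, ENNReal.ofReal (eDens p M u f x)) := by
  classical
  obtain ⟨c, η, C₁, hc, hη, hC₁, hpt⟩ := exists_pointwise_constants hN hp hκ hM
  obtain ⟨C₂, hC₂⟩ := exists_transition_bound (N := N) hd hp hM hc hΩo hΩf hiso
  have hcM : 0 < min c M := lt_min hc hM
  refine ⟨C₁, ENNReal.ofReal C₁ * (ENNReal.ofReal (1 / η) + N * C₂) +
      ENNReal.ofReal (C₁ + 1 / min c M),
    fun δ => ENNReal.ofReal (1 / η) + C₂ + (ENNReal.ofReal (1 / (min δ M * c ^ p)) +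
      ENNReal.ofReal (1 / (min c M * δ ^ p))), hC₁, ?_, ?_, ?_⟩
  · exact ENNReal.add_ne_top.2 ⟨ENNReal.mul_ne_top ENNReal.ofReal_ne_top
      (ENNReal.add_ne_top.2 ⟨ENNReal.ofReal_ne_top,
        ENNReal.mul_ne_top (ENNReal.natCast_ne_top N) ENNReal.coe_ne_top⟩), ENNReal.ofReal_ne_top⟩
  · intro δ
    simp
  intro A m u f hadm hf huc hfc hu0
  have hpt' : ∀ x ∈ Ω, _ := fun x hx => hpt (A x) (m x) (u x) (hadm x hx) (hu0 x hx)
  simp only [← hf] at hpt'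
  have hp0 : 0 ≤ p := by linarith
  set R := ∫⁻ x in Ω, ENNReal.ofReal (eDens p M u f x) with hR
  have hWc : ContinuousOn (fun x => wDens p M (u x) (f x)) Ω := by
    unfold wDens
    refine continuousOn_finsetSum _ fun i _ => ?_
    refine ((huc i).inf continuousOn_const).mul ?_
    exact ((hfc i).continuousOn.abs).rpow_const fun x _ => Or.inr hp0
  have hcheb := fun s (hs : 0 < s) => volume_wDens_ge_le (p := p) hM hΩo hu0 hWc (s := s) hs
  have hWe : ∀ x ∈ Ω, wDens p M (u x) (f x) ≤ eDens p M u f x :=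
    fun x hx => wDens_le_eDens hM (hu0 x hx)
  have hW0 : ∀ x ∈ Ω, 0 ≤ wDens p M (u x) (f x) := fun x hx => wDens_nonneg hM (hu0 x hx)
  have hmeasΩ := hΩo.measurableSet
  have hgrowth : ∀ g : EuclideanSpace ℝ (Fin d) → ℝ,
      (∀ x ∈ Ω, g x ≤ C₁ * (1 + wDens p M (u x) (f x))) →
      ∫⁻ x in Ω, ENNReal.ofReal (g x) ≤ ENNReal.ofReal C₁ * (volume Ω + R) := by
    intro g hg
    have h1 : ∫⁻ x in Ω, ENNReal.ofReal (g x) ≤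
        ∫⁻ x in Ω, ENNReal.ofReal C₁ * (1 + ENNReal.ofReal (eDens p M u f x)) := by
      refine setLIntegral_mono' hmeasΩ fun x hx => ?_
      rw [← ENNReal.ofReal_one, ← ENNReal.ofReal_add zero_le_one ((hW0 x hx).trans (hWe x hx)),
        ← ENNReal.ofReal_mul hC₁.le]
      refine ENNReal.ofReal_le_ofReal ((hg x hx).trans ?_)
      have := hWe x hx
      gcongr
    rwa [lintegral_const_mul' _ _ ENNReal.ofReal_ne_top, lintegral_add_left measurable_const,
      setLIntegral_const, one_mul] at h1
  have hsum0 : ∀ v : Fin N → ℝ, 0 ≤ ∑ i, |v i| ^ p := fun v =>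
    Finset.sum_nonneg fun i _ => Real.rpow_nonneg (abs_nonneg _) _
  refine ⟨hgrowth _ fun x hx => ?_, hgrowth _ fun x hx => ?_, ?_⟩
  · linarith [(hpt' x hx).2.2, hsum0 (f x)]
  · linarith [(hpt' x hx).2.2, hsum0 (u x)]
  set Z := {x ∈ Ω | η ≤ wDens p M (u x) (f x)} with hZ
  set T := fun i => {x ∈ Ω | (∀ j, -(c / 2) ≤ f x j) ∧ c ≤ f x i} with hT
  have htrans := hC₂ u f huc hfc hu0 fun x hx => (hpt' x hx).1
  have hZR : volume Z ≤ ENNReal.ofReal (1 / η) * R := hcheb η hη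
  refine ⟨Finset.univ.filter fun i => C₂ * R < volume (T i), ?_, ?_, ?_⟩
  · intro hI
    have hTR : ∀ i, volume (T i) ≤ C₂ * R := by
      intro i
      by_contra hcon
      have : i ∈ Finset.univ.filter fun i => C₂ * R < volume (T i) := by
        simpa using hcon
      rw [hI] at this
      simp at this
    set H := toMeasurable volume (Z ∪ ⋃ i, T i) with hH
    have hHm : MeasurableSet H := measurableSet_toMeasurable _ _
    have hHR : volume H ≤ (ENNReal.ofReal (1 / η) + N * C₂) * R := by
      rw [hH, measure_toMeasurable]
      calc volume (Z ∪ ⋃ i, T i) ≤ volume Z + volume (⋃ i, T i) := measure_union_le _ _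
        _ ≤ ENNReal.ofReal (1 / η) * R + ∑ i : Fin N, C₂ * R := by
            gcongr
            exact (measure_iUnion_fintype_le _ _).trans (Finset.sum_le_sum fun i _ => hTR i)
        _ = _ := by
            simp only [Finset.sum_const, Finset.card_univ, Fintype.card_fin, nsmul_eq_mul]
            ring
    have hpoint : ∀ x ∈ Ω, ENNReal.ofReal (∑ i, |f x i| ^ p) ≤
        H.indicator (fun _ => ENNReal.ofReal C₁) x +
          ENNReal.ofReal (C₁ + 1 / min c M) * ENNReal.ofReal (eDens p M u f x) := by
      intro x hx
      have he := hWe x hx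
      have hW := hW0 x hx
      rw [← ENNReal.ofReal_mul (by positivity)]
      by_cases hxb : x ∈ Z ∪ ⋃ i, T i
      · have hxH : x ∈ H := subset_toMeasurable _ _ hxb
        rw [Set.indicator_of_mem hxH, ← ENNReal.ofReal_add hC₁.le
          (mul_nonneg (by positivity) (hW.trans he))]
        refine ENNReal.ofReal_le_ofReal ?_
        have h1 : ∑ i, |f x i| ^ p ≤ C₁ * (1 + wDens p M (u x) (f x)) := by
          linarith [(hpt' x hx).2.2, hsum0 (u x)]
        have h2 : C₁ * wDens p M (u x) (f x) ≤ C₁ * eDens p M u f x := by gcongr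
        have h3 : 0 ≤ 1 / min c M * eDens p M u f x :=
          mul_nonneg (by positivity) (hW.trans he)
        nlinarith
      · refine le_add_left (ENNReal.ofReal_le_ofReal ?_)
        simp only [Set.mem_union, Set.mem_iUnion, not_or, not_exists] at hxb
        have hxZ : wDens p M (u x) (f x) < η := by
          by_contra hcon
          exact hxb.1 ⟨hx, not_lt.1 hcon⟩
        obtain ⟨hlow, hdich⟩ := (hpt' x hx).2.1 hxZ
        have hui : ∀ i, c ≤ u x i := by
          intro i
          rcases hdich i with h | h
          · exact h.2
          · exact absurd ⟨hx, hlow, h⟩ (hxb.2 i)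
        have h1 : min c M * ∑ i, |f x i| ^ p ≤ wDens p M (u x) (f x) := by
          rw [Finset.mul_sum]
          unfold wDens
          refine Finset.sum_le_sum fun i _ => ?_
          exact mul_le_mul_of_nonneg_right (min_le_min_right M (hui i))
            (Real.rpow_nonneg (abs_nonneg _) _)
        have h2 : ∑ i, |f x i| ^ p ≤ 1 / min c M * wDens p M (u x) (f x) := by
          rw [one_div, inv_mul_eq_div, le_div_iff₀ hcM]
          linarith
        have h3 : 1 / min c M * wDens p M (u x) (f x) ≤ 1 / min c M * eDens p M u f x := by
          gcongr
        have h4 : 0 ≤ C₁ * eDens p M u f x := mul_nonneg hC₁.le (hW.trans he)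
        nlinarith
    calc ∫⁻ x in Ω, ENNReal.ofReal (∑ i, |f x i| ^ p)
        ≤ ∫⁻ x in Ω, (H.indicator (fun _ => ENNReal.ofReal C₁) x +
          ENNReal.ofReal (C₁ + 1 / min c M) * ENNReal.ofReal (eDens p M u f x)) :=
          setLIntegral_mono' hmeasΩ hpoint
      _ = ENNReal.ofReal C₁ * volume.restrict Ω H + ENNReal.ofReal (C₁ + 1 / min c M) * R := by
          rw [lintegral_add_left (measurable_const.indicator hHm), lintegral_indicator_const hHm,
            lintegral_const_mul' _ _ ENNReal.ofReal_ne_top]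
      _ ≤ ENNReal.ofReal C₁ * ((ENNReal.ofReal (1 / η) + N * C₂) * R) +
          ENNReal.ofReal (C₁ + 1 / min c M) * R := by
          gcongr
          exact (Measure.restrict_apply_le _ _).trans hHR
      _ = _ := by ring
  · intro i hi δ hδ
    have hi' : C₂ * R < volume (T i) := by simpa using hi
    have hB : volume {x ∈ Ω | f x i ≤ c / 2} ≤ C₂ * R := by
      rcases min_le_iff.1 (htrans i) with h | h
      · exact absurd h (not_le.2 hi')
      · exact h
    have hs : 0 < min δ M * c ^ p := mul_pos (lt_min hδ hM) (Real.rpow_pos_of_pos hc p)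
    have hsub : {x ∈ Ω | δ ≤ |u x i|} ⊆ (Z ∪ {x ∈ Ω | f x i ≤ c / 2}) ∪
        {x ∈ Ω | min δ M * c ^ p ≤ wDens p M (u x) (f x)} := by
      rintro x ⟨hx, hxδ⟩
      rw [abs_of_nonneg (hu0 x hx i)] at hxδ
      by_cases hxZ : η ≤ wDens p M (u x) (f x)
      · exact Or.inl (Or.inl ⟨hx, hxZ⟩)
      rcases ((hpt' x hx).2.1 (not_le.1 hxZ)).2 i with h | h
      · exact Or.inl (Or.inr ⟨hx, h.1⟩)
      · refine Or.inr ⟨hx, le_trans ?_ (le_wDens hM (hu0 x hx) i)⟩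
        refine mul_le_mul (min_le_min_right M hxδ)
          (Real.rpow_le_rpow hc.le (h.trans (le_abs_self _)) hp0) (by positivity)
          (le_min (hu0 x hx i) hM.le)
    calc volume {x ∈ Ω | δ ≤ |u x i|} ≤ _ := measure_mono hsub
      _ ≤ (volume Z + volume {x ∈ Ω | f x i ≤ c / 2}) +
          volume {x ∈ Ω | min δ M * c ^ p ≤ wDens p M (u x) (f x)} :=
          (measure_union_le _ _).trans (by gcongr; exact measure_union_le _ _)
      _ ≤ (ENNReal.ofReal (1 / η) * R + C₂ * R) +
          (ENNReal.ofReal (1 / (min δ M * c ^ p)) * R +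
            ENNReal.ofReal (1 / (min c M * δ ^ p)) * R) := by
          gcongr
          exact (hcheb _ hs).trans le_self_add
      _ = _ := by ring
  · intro i hi δ hδ
    have hi' : volume (T i) ≤ C₂ * R := by simpa using hi
    have hs : 0 < min c M * δ ^ p := mul_pos hcM (Real.rpow_pos_of_pos hδ p)
    have hsub : {x ∈ Ω | δ ≤ |f x i|} ⊆ (Z ∪ T i) ∪
        {x ∈ Ω | min c M * δ ^ p ≤ wDens p M (u x) (f x)} := by
      rintro x ⟨hx, hxδ⟩
      by_cases hxZ : η ≤ wDens p M (u x) (f x)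
      · exact Or.inl (Or.inl ⟨hx, hxZ⟩)
      obtain ⟨hlow, hdich⟩ := (hpt' x hx).2.1 (not_le.1 hxZ)
      rcases hdich i with h | h
      · refine Or.inr ⟨hx, le_trans ?_ (le_wDens hM (hu0 x hx) i)⟩
        exact mul_le_mul (min_le_min_right M h.2) (Real.rpow_le_rpow hδ.le hxδ hp0)
          (by positivity) (le_min (hu0 x hx i) hM.le)
      · exact Or.inl (Or.inr ⟨hx, hlow, h⟩)
    calc volume {x ∈ Ω | δ ≤ |f x i|} ≤ _ := measure_mono hsub
      _ ≤ (volume Z + volume (T i)) +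
          volume {x ∈ Ω | min c M * δ ^ p ≤ wDens p M (u x) (f x)} :=
          (measure_union_le _ _).trans (by gcongr; exact measure_union_le _ _)
      _ ≤ (ENNReal.ofReal (1 / η) * R + C₂ * R) +
          (ENNReal.ofReal (1 / (min δ M * c ^ p)) * R +
            ENNReal.ofReal (1 / (min c M * δ ^ p)) * R) := by
          gcongr
          exact (hcheb _ hs).trans le_add_self
      _ = _ := by ring

/-- The uniform truncated Poincaré–Beckner inequality (Theorem 2). Let `Ω ⊂ ℝ^d` be a
bounded, connected, open set admitting the relative isoperimetric inequality, `p ≥ 1`, and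
let `𝒜` be a family of `C¹` pairs of coefficients, each admissible with the same constant
`κ`. Let `M > 0` dominate all components of all the solutions `u_I` of the degenerate
systems, over all pairs in `𝒜`, points of `Ω̄` and index sets `I`. Let `U` be a set of
nonnegative `C¹` functions such that one cannot choose an `L^p`-bounded sequence in `U`,
a sequence of pairs in `𝒜`, and a nonempty index set `I` with `u_{in} → 0` in measure for
`i ∈ I` and `f_{in} → 0` in measure for `i ∉ I`. Then there is `C > 0` with
`∫_Ω Σ_i |f_i|^p ≤ C ∫_Ω Σ_i min(u_i, M) (|f_i|^p + |∇f_i|^p)` for all `u ∈ U` and all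
pairs in `𝒜`. -/
theorem poincare_beckner_truncated_uniform {d N : ℕ} (hd : 0 < d) (hN : 0 < N)
    (p κ : ℝ) (hp : 1 ≤ p) (hκ : 0 < κ)
    (Ω : Set (EuclideanSpace ℝ (Fin d)))
    (hΩo : IsOpen Ω) (hΩb : Bornology.IsBounded Ω) (hΩc : IsConnected Ω)
    (hiso : ∃ c : ℝ, 0 < c ∧ ∀ S : Set (EuclideanSpace ℝ (Fin d)), S ⊆ Ω →
      MeasurableSet S → volume S ≤ volume Ω / 2 →
      ENNReal.ofReal c * volume S ^ (((d : ℝ) - 1) / d) ≤ μH[(d : ℝ) - 1] (Ω ∩ frontier S))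
    (𝒜 : Set ((Fin N → Fin N → EuclideanSpace ℝ (Fin d) → ℝ) ×
      (Fin N → EuclideanSpace ℝ (Fin d) → ℝ)))
    (h𝒜C1 : ∀ Am ∈ 𝒜, (∀ i j, ContDiffOn ℝ 1 (Am.1 i j) (closure Ω)) ∧
      ∀ i, ContDiffOn ℝ 1 (Am.2 i) (closure Ω))
    (h𝒜adm : ∀ Am ∈ 𝒜, ∀ x ∈ closure Ω,
      IsAdmissible κ (Matrix.of fun i j => Am.1 i j x) fun i => Am.2 i x)
    (uI : ((Fin N → Fin N → EuclideanSpace ℝ (Fin d) → ℝ) ×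
        (Fin N → EuclideanSpace ℝ (Fin d) → ℝ)) →
      Finset (Fin N) → EuclideanSpace ℝ (Fin d) → Fin N → ℝ)
    (huI : ∀ Am ∈ 𝒜, ∀ I : Finset (Fin N), ∀ x ∈ closure Ω,
      (∀ i ∈ I, uI Am I x i = 0) ∧
        ∀ j ∉ I, Am.2 j x - ∑ k, Am.1 j k x * uI Am I x k = 0)
    (M : ℝ) (hM0 : 0 < M)
    (hM : ∀ Am ∈ 𝒜, ∀ I : Finset (Fin N), ∀ x ∈ closure Ω, ∀ i, uI Am I x i < M)
    (U : Set (EuclideanSpace ℝ (Fin d) → Fin N → ℝ))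
    (hUC1 : ∀ u ∈ U, ∀ i, ContDiffOn ℝ 1 (fun x => u x i) (closure Ω))
    (hU0 : ∀ u ∈ U, ∀ x ∈ Ω, ∀ i, 0 ≤ u x i)
    (hUsep : ¬ ∃ (useq : ℕ → EuclideanSpace ℝ (Fin d) → Fin N → ℝ)
        (Amseq : ℕ → (Fin N → Fin N → EuclideanSpace ℝ (Fin d) → ℝ) ×
          (Fin N → EuclideanSpace ℝ (Fin d) → ℝ)),
      (∀ n, useq n ∈ U) ∧ (∀ n, Amseq n ∈ 𝒜) ∧
      (∃ B : ℝ, ∀ n,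
        ∫⁻ x in Ω, ENNReal.ofReal (∑ i, |useq n x i| ^ p) ≤ ENNReal.ofReal B) ∧
      ∃ I : Finset (Fin N), I.Nonempty ∧
        (∀ i ∈ I, TendstoInMeasure (volume.restrict Ω)
          (fun n x => useq n x i) atTop fun _ => 0) ∧
        ∀ i ∉ I, TendstoInMeasure (volume.restrict Ω)
          (fun n x => (Amseq n).2 i x - ∑ j, (Amseq n).1 i j x * useq n x j)
          atTop fun _ => 0) :
    ∃ C : ℝ, 0 < C ∧ ∀ u ∈ U, ∀ Am ∈ 𝒜,
      ∫⁻ x in Ω, ENNReal.ofReal (∑ i, |Am.2 i x - ∑ j, Am.1 i j x * u x j| ^ p) ≤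
        ENNReal.ofReal C * ∫⁻ x in Ω, ENNReal.ofReal (∑ i, min (u x i) M *
          (|Am.2 i x - ∑ j, Am.1 i j x * u x j| ^ p +
            ‖gradient (fun y => Am.2 i y - ∑ j, Am.1 i j y * u y j) x‖ ^ p)) := by
  -- For `d = 1` the isoperimetric hypothesis fails at `S = ∅`, since `0 ^ 0 = 1`.
  have hd2 : 2 ≤ d := by
    by_contra hcon
    obtain rfl : d = 1 := by omega
    obtain ⟨c, hc, h⟩ := hiso
    have := h ∅ (Set.empty_subset _) MeasurableSet.empty (by simp)
    simp at this
    linarith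
  have hΩf : volume Ω ≠ ⊤ := hΩb.measure_lt_top.ne
  have hmeasΩ := hΩo.measurableSet
  obtain ⟨C₁, K, L, hC₁, hK, hL, halt⟩ := exists_alternative hd2 hN hp hκ hM0 hΩo hΩf hiso
  by_contra! hcon
  -- The constants `K + C₁ + n + 1` exclude an empty index set and force `R n → 0`.
  have hseq : ∀ n : ℕ, ∃ u ∈ U, ∃ Am ∈ 𝒜, _ := fun n =>
    hcon (K.toReal + C₁ + (n + 1)) (by positivity)
  choose useq huU Amseq hAm hlt using hseq
  set f : ℕ → EuclideanSpace ℝ (Fin d) → Fin N → ℝ := fun n x i =>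
    (Amseq n).2 i x - ∑ j, (Amseq n).1 i j x * useq n x j with hf
  set R : ℕ → ENNReal := fun n => ∫⁻ x in Ω, ENNReal.ofReal (eDens p M (useq n) (f n) x) with hR
  set F : ℕ → ENNReal := fun n => ∫⁻ x in Ω, ENNReal.ofReal (∑ i, |f n x i| ^ p) with hF
  have hlt' : ∀ n, (K + ENNReal.ofReal C₁ + (n + 1)) * R n < F n := by
    intro n
    have h := hlt n
    rw [ENNReal.ofReal_add (by positivity) (by positivity),
      ENNReal.ofReal_add (by positivity) hC₁.le, ENNReal.ofReal_toReal hK,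
      ENNReal.ofReal_add (by positivity) zero_le_one, ENNReal.ofReal_natCast,
      ENNReal.ofReal_one] at h
    exact h
  have halt' := fun n => halt
    (fun x => Matrix.of fun i j => (Amseq n).1 i j x) (fun x i => (Amseq n).2 i x)
    (useq n) (f n) (fun x hx => h𝒜adm _ (hAm n) x (subset_closure hx)) (fun x => rfl)
    (fun i => ((hUC1 _ (huU n) i).mono subset_closure).continuousOn)
    (fun i => by
      refine ContDiffOn.sub (((h𝒜C1 _ (hAm n)).2 i).mono subset_closure) ?_
      refine ContDiffOn.sum fun j _ => ?_
      exact (((h𝒜C1 _ (hAm n)).1 i j).mono subset_closure).mul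
        ((hUC1 _ (huU n) j).mono subset_closure))
    (hU0 _ (huU n))
  choose hub hFb I hI0 hIu hIf using halt'
  have hRtop : ∀ n, R n ≠ ⊤ := by
    intro n hn
    have h := hlt' n
    rw [hn, ENNReal.mul_top (by simp)] at h
    exact not_top_lt h
  have hRn : ∀ n : ℕ, ((n : ENNReal) + 1) * R n ≤ ENNReal.ofReal C₁ * volume Ω := by
    intro n
    have h1 : ENNReal.ofReal C₁ * R n + (n + 1) * R n ≤
        ENNReal.ofReal C₁ * R n + ENNReal.ofReal C₁ * volume Ω := by
      calc ENNReal.ofReal C₁ * R n + (n + 1) * R n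
          ≤ (K + ENNReal.ofReal C₁ + (n + 1)) * R n := by
            rw [← add_mul]
            gcongr
            exact le_add_self
        _ ≤ F n := (hlt' n).le
        _ ≤ ENNReal.ofReal C₁ * (volume Ω + R n) := hFb n
        _ = _ := by ring
    exact (ENNReal.add_le_add_iff_left (ENNReal.mul_ne_top ENNReal.ofReal_ne_top (hRtop n))).1 h1
  have hVtop : ENNReal.ofReal C₁ * volume Ω ≠ ⊤ := ENNReal.mul_ne_top ENNReal.ofReal_ne_top hΩf
  have hRle : ∀ n, R n ≤ ENNReal.ofReal C₁ * volume Ω := fun n =>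
    le_trans (le_mul_of_one_le_left (zero_le) le_add_self) (hRn n)
  have hR0 : Tendsto R atTop (nhds 0) := by
    have h1 : ∀ n, R n ≤ ENNReal.ofReal C₁ * volume Ω * ((n + 1 : ℕ) : ENNReal)⁻¹ := by
      intro n
      rw [← div_eq_mul_inv, ENNReal.le_div_iff_mul_le (by simp) (by simp), mul_comm]
      exact_mod_cast hRn n
    refine tendsto_of_tendsto_of_tendsto_of_le_of_le tendsto_const_nhds ?_ (fun _ => zero_le) h1
    have h2 : Tendsto (fun n : ℕ => ((n + 1 : ℕ) : ENNReal)⁻¹) atTop (nhds 0) :=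
      ENNReal.tendsto_inv_nat_nhds_zero.comp (tendsto_add_atTop_nat 1)
    simpa using ENNReal.Tendsto.const_mul h2 (Or.inr hVtop)
  have hIne : ∀ n, (I n).Nonempty := by
    intro n
    by_contra hne
    have h1 := hI0 n (Finset.not_nonempty_iff_eq_empty.1 hne)
    refine absurd (hlt' n) (not_lt.2 (h1.trans ?_))
    have : K ≤ K + ENNReal.ofReal C₁ + (n + 1) := by
      rw [add_assoc]; exact le_self_add
    exact mul_le_mul_left this _
  obtain ⟨J, hJ⟩ := Finite.exists_infinite_fiber I
  have hfreq : ∃ᶠ n in atTop, I n = J :=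
    Nat.frequently_atTop_iff_infinite.2 (Set.infinite_coe_iff.1 hJ)
  obtain ⟨φ, hφ, hφJ⟩ := extraction_of_frequently_atTop hfreq
  have hsmall : ∀ δ, Tendsto (fun n => L δ * R (φ n)) atTop (nhds 0) := fun δ => by
    simpa using ENNReal.Tendsto.const_mul (hR0.comp hφ.tendsto_atTop) (Or.inr (hL δ))
  refine hUsep ⟨useq ∘ φ, Amseq ∘ φ, fun n => huU _, fun n => hAm _, ?_, J, ?_, ?_, ?_⟩
  · refine ⟨(ENNReal.ofReal C₁ * (volume Ω + ENNReal.ofReal C₁ * volume Ω)).toReal, fun n => ?_⟩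
    rw [ENNReal.ofReal_toReal (ENNReal.mul_ne_top ENNReal.ofReal_ne_top
      (ENNReal.add_ne_top.2 ⟨hΩf, hVtop⟩))]
    refine (hub (φ n)).trans ?_
    gcongr
    exact hRle _
  · rw [← hφJ 0]
    exact hIne _
  · intro i hi
    rw [tendstoInMeasure_iff_norm]
    intro δ hδ
    refine tendsto_of_tendsto_of_tendsto_of_le_of_le tendsto_const_nhds (hsmall δ)
      (fun _ => zero_le) fun n => ?_
    refine le_trans (le_of_eq ?_) (hIu (φ n) i (by rw [hφJ n]; exact hi) δ hδ)
    rw [Measure.restrict_apply' hmeasΩ]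
    congr 1
    ext x
    simp [and_comm]
  · intro i hi
    rw [tendstoInMeasure_iff_norm]
    intro δ hδ
    refine tendsto_of_tendsto_of_tendsto_of_le_of_le tendsto_const_nhds (hsmall δ)
      (fun _ => zero_le) fun n => ?_
    refine le_trans (le_of_eq ?_) (hIf (φ n) i (by rw [hφJ n]; exact hi) δ hδ)
    rw [Measure.restrict_apply' hmeasΩ]
    congr 1
    ext x
    simp [and_comm, hf]
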